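/- There exist T > 0 and γ > 0 and a sequence of functions e_0, e_1, e_2, …, each analytic in the complex vector t in a neighborhood of t = 0, such that the following holds: for every h ∈ ℕ there is a constant C, independent of t for t ∈ 𝕋(T,γ), with | log( Z_N(t) / Z_N(0) ) − ( N² e_0(t) + e_1(t) + N^{−2} e_2(t) + … + N^{−2h} e_{h+1}(t) ) | ≤ C N^{−2h−2} for all N ≥ 1; i.e. log(Z_N(t)/Z_N(0)) admits the complete uniform asymptotic expansion N² e_0(t) + e_1(t) + N^{−2} e_2(t) + ⋯ in even powers of 1/N. -/

import Mathlib

open MeasureTheory Filter Finset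

noncomputable section

namespace LoopEq

/-- The external field `V_t(x) = x^2/2 + ∑_{j=1}^v t_j x^j`. -/
def Vt (v : ℕ) (t : ℕ → ℝ) (x : ℝ) : ℝ :=
  x ^ 2 / 2 + ∑ j ∈ Finset.Icc 1 v, t j * x ^ j

/-- The derivative `V_t'(x) = x + ∑_{j=1}^v j t_j x^(j-1)`. -/
def Vt' (v : ℕ) (t : ℕ → ℝ) (x : ℝ) : ℝ :=
  x + ∑ j ∈ Finset.Icc 1 v, (j : ℝ) * t j * x ^ (j - 1)

/-- The complex extension of `V_t'`. -/
def Vt'C (v : ℕ) (t : ℕ → ℝ) (z : ℂ) : ℂ :=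
  z + ∑ j ∈ Finset.Icc 1 v, (j : ℂ) * (t j : ℂ) * z ^ (j - 1)

/-- The parameter domain `𝕋(T,γ)`. -/
def Tdom (v : ℕ) (T γ : ℝ) : Set (ℕ → ℝ) :=
  {t | Real.sqrt (∑ j ∈ Finset.Icc 1 v, t j ^ 2) ≤ T ∧
    γ * ∑ j ∈ Finset.Icc 1 (v - 1), |t j| < t v}

/-- The (unnormalized) joint eigenvalue density
`∏_{j<ℓ} (λ_j - λ_ℓ)^2 exp(-N ∑_j V_t(λ_j))`. -/
def dens (v N : ℕ) (t : ℕ → ℝ) (x : Fin N → ℝ) : ℝ :=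
  (∏ p ∈ Finset.univ.filter (fun p : Fin N × Fin N => p.1 < p.2), (x p.1 - x p.2) ^ 2) *
    Real.exp (-(N : ℝ) * ∑ i, Vt v t (x i))

/-- The eigenvalue partition function `Z_N(t)`. -/
def Z (v N : ℕ) (t : ℕ → ℝ) : ℝ :=
  ∫ x : Fin N → ℝ, dens v N t x

/-- Expectation of an eigenvalue statistic with respect to `P_{N,t}`. -/
def Ee (v N : ℕ) (t : ℕ → ℝ) (f : (Fin N → ℝ) → ℝ) : ℝ :=
  (∫ x : Fin N → ℝ, f x * dens v N t x) / Z v N t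

/-- The weighted logarithmic energy `∫ V_t dμ - ∫∫ log |λ-η| dμ dμ`. -/
def energy (v : ℕ) (t : ℕ → ℝ) (μ : Measure ℝ) : ℝ :=
  (∫ x, Vt v t x ∂μ) - ∫ x, (∫ y, Real.log |x - y| ∂μ) ∂μ

/-- `μ` is the equilibrium measure: a Borel probability measure minimizing the
weighted logarithmic energy. -/
def IsEqMeasure (v : ℕ) (t : ℕ → ℝ) (μ : Measure ℝ) : Prop :=
  IsProbabilityMeasure μ ∧
    ∀ ν : Measure ℝ, IsProbabilityMeasure ν → energy v t μ ≤ energy v t ν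

/-- The equilibrium density `(1/2π) χ_(α,β)(x) √((x-α)(β-x)) h(x)`. -/
def eqDensity (α β : ℝ) (h : Polynomial ℝ) (x : ℝ) : ℝ :=
  Set.indicator (Set.Ioo α β)
    (fun y => (2 * Real.pi)⁻¹ * Real.sqrt ((y - α) * (β - y)) * h.eval y) x

/-- The support of a measure on ℝ: points all of whose neighborhoods have
positive measure. -/
def msupport (μ : Measure ℝ) : Set ℝ :=
  {x | ∀ U ∈ nhds x, 0 < μ U}

/-- `ρ` is the one-point function: the density of the expected empirical
measure of eigenvalues. -/
def IsOnePoint (v N : ℕ) (t : ℕ → ℝ) (ρ : ℝ → ℝ) : Prop :=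
  ∀ A : Set ℝ, MeasurableSet A →
    ∫ x in A, ρ x = Ee v N t (fun x => (∑ j, Set.indicator A 1 (x j)) / N)

/-- Embedding of `v` real parameters `(t_1, …, t_v)` as a parameter function. -/
def pad (v : ℕ) (s : Fin v → ℝ) : ℕ → ℝ := fun j =>
  if h : 1 ≤ j ∧ j - 1 < v then s ⟨j - 1, h.2⟩ else 0

/-! Hermitian matrix model -/

/-- Real coordinates for an `N × N` Hermitian matrix: the diagonal entries and
the real and imaginary parts of the above-diagonal entries. -/
abbrev coords (N : ℕ) :=
  (Fin N → ℝ) × ({p : Fin N × Fin N // p.1 < p.2} → ℝ × ℝ)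

/-- The Hermitian matrix with the given real coordinates. -/
def herm (N : ℕ) (e : coords N) : Matrix (Fin N) (Fin N) ℂ := fun i j =>
  if hij : i < j then ⟨(e.2 ⟨(i, j), hij⟩).1, (e.2 ⟨(i, j), hij⟩).2⟩
  else if hji : j < i then ⟨(e.2 ⟨(j, i), hji⟩).1, -(e.2 ⟨(j, i), hji⟩).2⟩
  else ((e.1 i : ℝ) : ℂ)

/-- The matrix external field `V_t(M) = M^2/2 + ∑_{j=1}^v t_j M^j`. -/
def VtM (v N : ℕ) (t : ℕ → ℝ) (M : Matrix (Fin N) (Fin N) ℂ) :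
    Matrix (Fin N) (Fin N) ℂ :=
  (2⁻¹ : ℂ) • M ^ 2 + ∑ j ∈ Finset.Icc 1 v, ((t j : ℂ)) • M ^ j

/-- `V_t'(M) = M + ∑_{j=1}^v j t_j M^(j-1)`. -/
def Vt'M (v N : ℕ) (t : ℕ → ℝ) (M : Matrix (Fin N) (Fin N) ℂ) :
    Matrix (Fin N) (Fin N) ℂ :=
  M + ∑ j ∈ Finset.Icc 1 v, ((j : ℂ) * (t j : ℂ)) • M ^ (j - 1)

/-- The unnormalized density `exp(-N Tr V_t(M))` of the unitary ensemble
measure in the real coordinates of the Hermitian matrix `M`. -/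
def wt (v N : ℕ) (t : ℕ → ℝ) (e : coords N) : ℝ :=
  Real.exp (-(N : ℝ) * (Matrix.trace (VtM v N t (herm N e))).re)

/-- The matrix-model partition function `Z̃_N`. -/
def Zmat (v N : ℕ) (t : ℕ → ℝ) : ℝ :=
  ∫ e : coords N, wt v N t e

/-- Expectation `E` of a matrix statistic with respect to the unitary ensemble
measure `μ_t`. -/
def Em (v N : ℕ) (t : ℕ → ℝ) (f : coords N → ℂ) : ℂ :=
  (∫ e : coords N, f e * (wt v N t e : ℂ)) / (Zmat v N t : ℂ)

/-- The Green's function (resolvent) `G(z, M) = (z - M)⁻¹`. -/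
def G (N : ℕ) (z : ℂ) (M : Matrix (Fin N) (Fin N) ℂ) : Matrix (Fin N) (Fin N) ℂ :=
  (z • (1 : Matrix (Fin N) (Fin N) ℂ) - M)⁻¹



/-- One-letter weight. -/
def om (r : ℝ) (k : ℕ) : ℝ := 2 * r ^ k / ((k : ℝ) + 1) ^ 2

/-- Weight of a word. -/
def lw (r : ℝ) (κ : List ℕ) : ℝ := (κ.map (om r)).prod

lemma om_pos {r : ℝ} (hr : 0 < r) (k : ℕ) : 0 < om r k := by
  unfold om; positivity

lemma lw_nil (r : ℝ) : lw r [] = 1 := by simp [lw]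

lemma lw_cons (r : ℝ) (k : ℕ) (κ : List ℕ) : lw r (k :: κ) = om r k * lw r κ := by
  simp [lw]

lemma lw_pos {r : ℝ} (hr : 0 < r) (κ : List ℕ) : 0 < lw r κ := by
  induction κ with
  | nil => simp [lw_nil]
  | cons k κ ih => rw [lw_cons]; exact mul_pos (om_pos hr k) ih

lemma om_mono {r r' : ℝ} (hr : 0 < r) (h : r ≤ r') (k : ℕ) : om r k ≤ om r' k := by
  unfold om; gcongr

lemma lw_mono {r r' : ℝ} (hr : 0 < r) (h : r ≤ r') (κ : List ℕ) : lw r κ ≤ lw r' κ := by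
  induction κ with
  | nil => simp [lw_nil]
  | cons k κ ih =>
    rw [lw_cons, lw_cons]
    exact mul_le_mul (om_mono hr h k) ih (lw_pos hr _).le (om_pos (hr.trans_le h) k).le

lemma om_zero (r : ℝ) : om r 0 = 2 := by simp [om]

lemma sum_inv_sq_le' (m : ℕ) :
    ∑ a ∈ range (m + 1), 1 / ((a : ℝ) + 1) ^ 2 ≤ 2 - 1 / ((m : ℝ) + 1) := by
  induction m with
  | zero => simp; norm_num
  | succ m ih =>
    rw [Finset.sum_range_succ]
    have : 1 / (((m + 1 : ℕ) : ℝ) + 1) ^ 2 ≤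
        1 / ((m : ℝ) + 1) - 1 / (((m + 1 : ℕ) : ℝ) + 1) := by
      push_cast
      rw [div_sub_div _ _ (by positivity) (by positivity), div_le_div_iff₀ (by positivity)
        (by positivity)]
      have : (0 : ℝ) ≤ m := by positivity
      nlinarith
    linarith

lemma sum_inv_sq_le (m : ℕ) : ∑ a ∈ range m, 1 / ((a : ℝ) + 1) ^ 2 ≤ 2 := by
  cases m with
  | zero => simp
  | succ m =>
    have := sum_inv_sq_le' m
    have h : 0 ≤ 1 / ((m : ℝ) + 1) := by positivity
    linarith

/-- Convolution bound for the weights. -/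
lemma om_conv {r : ℝ} (hr : 16 ≤ r) (k : ℕ) :
    ∑ a ∈ range k, om r a * om r (k - 1 - a) ≤ (1 / 4) * om r (k + 1) := by
  have hr0 : 0 < r := by linarith
  cases k with
  | zero => simp; exact (om_pos hr0 _).le
  | succ n =>
    have h1 : ∀ a ∈ range (n + 1), om r a * om r (n + 1 - 1 - a) ≤
        4 * r ^ n * (2 / ((n : ℝ) + 2) ^ 2) *
          (1 / ((a : ℝ) + 1) ^ 2 + 1 / (((n - a : ℕ) : ℝ) + 1) ^ 2) := by
      intro a ha
      have ha' : a ≤ n := by simpa [Nat.lt_succ_iff] using ha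
      obtain ⟨b, rfl⟩ := Nat.exists_eq_add_of_le ha'
      have e1 : a + b + 1 - 1 - a = b := by omega
      have e2 : a + b - a = b := by omega
      rw [e1, e2]
      unfold om
      have e3 : 2 * r ^ a / ((a : ℝ) + 1) ^ 2 * (2 * r ^ b / ((b : ℝ) + 1) ^ 2) =
          4 * r ^ (a + b) * (1 / (((a : ℝ) + 1) ^ 2 * ((b : ℝ) + 1) ^ 2)) := by
        rw [pow_add]; field_simp; ring
      rw [e3, mul_assoc (4 * r ^ (a + b))]
      refine mul_le_mul_of_nonneg_left ?_ (by positivity)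
      have hp : (0 : ℝ) < (a : ℝ) + 1 := by positivity
      have hq : (0 : ℝ) < (b : ℝ) + 1 := by positivity
      push_cast
      rw [div_add_div _ _ (by positivity) (by positivity), div_mul_div_comm,
        div_le_div_iff₀ (by positivity) (by positivity)]
      have : 0 ≤ ((a : ℝ) + 1) ^ 2 * ((b : ℝ) + 1) ^ 2 := by positivity
      nlinarith [mul_nonneg this (sq_nonneg ((a : ℝ) - b))]
    refine (Finset.sum_le_sum h1).trans ?_
    rw [← Finset.mul_sum, Finset.sum_add_distrib]
    have h2 : ∑ a ∈ range (n + 1), 1 / (((n - a : ℕ) : ℝ) + 1) ^ 2 ≤ 2 := by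
      rw [← Finset.sum_range_reflect]
      refine le_trans (le_of_eq ?_) (sum_inv_sq_le (n + 1))
      refine Finset.sum_congr rfl fun a ha => ?_
      have ha' : a ≤ n := by simpa [Nat.lt_succ_iff] using ha
      have : n - (n + 1 - 1 - a) = a := by omega
      rw [this]
    have h3 := sum_inv_sq_le (n + 1)
    calc _ ≤ 4 * r ^ n * (2 / ((n : ℝ) + 2) ^ 2) * 4 := by
          refine mul_le_mul_of_nonneg_left (by linarith) (by positivity)
      _ ≤ _ := by
          unfold om
          push_cast
          have : 4 * r ^ n * (2 / ((n : ℝ) + 2) ^ 2) * 4 = 32 * r ^ n / ((n : ℝ) + 2) ^ 2 := by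
            ring
          rw [this, ← mul_div_assoc, div_le_div_iff₀ (by positivity) (by positivity)]
          have h5 : ((n : ℝ) + 1 + 1 + 1) ^ 2 ≤ 4 * ((n : ℝ) + 2) ^ 2 := by
            have : (0 : ℝ) ≤ n := by positivity
            nlinarith
          have h6 : (256 : ℝ) ≤ r ^ 2 := by nlinarith
          have h7 : 0 < r ^ n := by positivity
          calc 32 * r ^ n * ((n : ℝ) + 1 + 1 + 1) ^ 2 
              ≤ 32 * r ^ n * (4 * ((n : ℝ) + 2) ^ 2) := by gcongr
            _ = 128 * (r ^ n * ((n : ℝ) + 2) ^ 2) := by ring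
            _ ≤ (r ^ 2 / 2) * (r ^ n * ((n : ℝ) + 2) ^ 2) := by
                refine mul_le_mul_of_nonneg_right (by linarith) (by positivity)
            _ = _ := by ring

/-- Shift bound for the weights. -/
lemma om_shift {r : ℝ} (hr : 16 ≤ r) (k j v : ℕ) (hj : j < v) :
    ((j : ℝ) + 1) * om r (k + j) ≤ 4 * v * r ^ v * om r (k + 1) := by
  have hr0 : 0 < r := by linarith
  have hjv : ((j : ℝ) + 1) ≤ v := by exact_mod_cast hj
  have h1 : r ^ (k + j) ≤ r ^ (k + 1) * r ^ v := by
    rw [← pow_add]; exact pow_le_pow_right₀ (by linarith) (by omega)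
  have h2 : om r (k + j) ≤ 4 * r ^ v * om r (k + 1) := by
    unfold om
    push_cast
    rw [← mul_div_assoc, div_le_div_iff₀ (by positivity) (by positivity)]
    have h5 : ((k : ℝ) + 1 + 1) ^ 2 ≤ 4 * ((k : ℝ) + j + 1) ^ 2 := by
      have : (0 : ℝ) ≤ k := by positivity
      have : (0 : ℝ) ≤ j := by positivity
      nlinarith
    calc 2 * r ^ (k + j) * ((k : ℝ) + 1 + 1) ^ 2 
        ≤ 2 * (r ^ (k + 1) * r ^ v) * (4 * ((k : ℝ) + j + 1) ^ 2) := by gcongr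
      _ = _ := by ring
  have := om_pos hr0 (k + j)
  calc _ ≤ v * (4 * r ^ v * om r (k + 1)) := by gcongr
    _ = _ := by ring

/-- Merge bound for the weights. -/
lemma om_merge {r : ℝ} (hr : 16 ≤ r) (k q : ℕ) :
    (q : ℝ) * om r (k + q - 1) ≤ q * ((q : ℝ) + 1) ^ 2 * (om r (k + 1) * om r q) := by
  have hr0 : 0 < r := by linarith
  cases q with
  | zero => simp
  | succ q =>
    rw [mul_assoc]
    refine mul_le_mul_of_nonneg_left ?_ (by positivity)
    have : k + (q + 1) - 1 = k + q := by omega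
    rw [this]
    unfold om
    push_cast
    have e : ((q : ℝ) + 1 + 1) ^ 2 * (2 * r ^ (k + 1) / ((k : ℝ) + 1 + 1) ^ 2 *
        (2 * r ^ (q + 1) / ((q : ℝ) + 1 + 1) ^ 2)) =
        4 * r ^ (k + q) * r ^ 2 / ((k : ℝ) + 1 + 1) ^ 2 := by
      field_simp; ring
    rw [e, div_le_div_iff₀ (by positivity) (by positivity)]
    have h5 : ((k : ℝ) + 1 + 1) ^ 2 ≤ 4 * ((k : ℝ) + q + 1) ^ 2 := by
      have : (0 : ℝ) ≤ k := by positivity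
      have : (0 : ℝ) ≤ q := by positivity
      nlinarith
    have h6 : (8 : ℝ) ≤ 4 * r ^ 2 := by nlinarith
    calc 2 * r ^ (k + q) * ((k : ℝ) + 1 + 1) ^ 2 
        ≤ 2 * r ^ (k + q) * (4 * ((k : ℝ) + q + 1) ^ 2) := by gcongr
      _ = 8 * (r ^ (k + q) * ((k : ℝ) + q + 1) ^ 2) := by ring
      _ ≤ (4 * r ^ 2) * (r ^ (k + q) * ((k : ℝ) + q + 1) ^ 2) := by gcongr
      _ = _ := by ring

lemma lw_scale {r r' : ℝ} (hr' : 0 < r') (κ : List ℕ) :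
    lw r κ = (r / r') ^ κ.sum * lw r' κ := by
  induction κ with
  | nil => simp [lw_nil]
  | cons k κ ih =>
    rw [lw_cons, lw_cons, ih, List.sum_cons, pow_add]
    unfold om
    rw [div_pow, div_pow]
    field_simp

/-- The weight dominates a bounded configuration. -/
lemma pow_le_om {R r : ℝ} (hR : 0 < R) (h : 4 * R ≤ r) (k : ℕ) : R ^ k ≤ om r k := by
  unfold om
  rw [le_div_iff₀ (by positivity)]
  have h1 : ((k : ℝ) + 1) ^ 2 ≤ 2 * 4 ^ k := by
    induction k with
    | zero => norm_num
    | succ n ih =>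
      push_cast
      rw [pow_succ (4 : ℝ)]
      nlinarith [(by positivity : (0 : ℝ) ≤ n)]
  calc R ^ k * ((k : ℝ) + 1) ^ 2 ≤ R ^ k * (2 * 4 ^ k) := by gcongr
    _ = 2 * (4 * R) ^ k := by rw [mul_pow]; ring
    _ ≤ _ := by gcongr

lemma pow_sum_le_lw {R r : ℝ} (hR : 0 < R) (h : 4 * R ≤ r) (κ : List ℕ) :
    R ^ κ.sum ≤ lw r κ := by
  induction κ with
  | nil => simp [lw_nil]
  | cons k κ ih =>
    rw [lw_cons, List.sum_cons, pow_add]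
    exact mul_le_mul (pow_le_om hR h k) ih (by positivity)
      (om_pos (by linarith) k).le

/-- The `t`-independent part of the transfer operator. -/
def K0 : (List ℕ → ℂ) →ₗ[ℂ] (List ℕ → ℂ) where
  toFun X κ := match κ with
    | [] => 0
    | 0 :: κ => X κ
    | (k + 1) :: κ => ∑ a ∈ range k, X (a :: (k - 1 - a) :: κ)
  map_add' X Y := by
    funext κ
    match κ with
    | [] => simp
    | 0 :: κ => simp
    | (k + 1) :: κ => simp [Finset.sum_add_distrib]
  map_smul' c X := by
    funext κ
    match κ with
    | [] => simp
    | 0 :: κ => simp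
    | (k + 1) :: κ => simp [Finset.mul_sum]

/-- The coefficient of `t_{j+1}` in the transfer operator. -/
def K1 (j : ℕ) : (List ℕ → ℂ) →ₗ[ℂ] (List ℕ → ℂ) where
  toFun X κ := match κ with
    | [] => 0
    | 0 :: _ => 0
    | (k + 1) :: κ => -(((j : ℂ) + 1) * X ((k + j) :: κ))
  map_add' X Y := by
    funext κ
    match κ with
    | [] => simp
    | 0 :: κ => simp
    | (k + 1) :: κ => simp; ring
  map_smul' c X := by
    funext κ
    match κ with
    | [] => simp
    | 0 :: κ => simp
    | (k + 1) :: κ => simp; ring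

/-- The merge operator, multiplied by `N⁻²` in the loop equations. -/
def Bop : (List ℕ → ℂ) →ₗ[ℂ] (List ℕ → ℂ) where
  toFun X κ := match κ with
    | [] => 0
    | 0 :: _ => 0
    | (k + 1) :: κ => ∑ l : Fin κ.length, (κ[l] : ℂ) * X ((k + κ[l] - 1) :: κ.eraseIdx l)
  map_add' X Y := by
    funext κ
    match κ with
    | [] => simp
    | 0 :: κ => simp
    | (k + 1) :: κ => simp [Finset.sum_add_distrib, mul_add]
  map_smul' c X := by
    funext κ
    match κ with
    | [] => simp
    | 0 :: κ => simp
    | (k + 1) :: κ => simp [Finset.mul_sum, mul_left_comm]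

/-- Weighted bound. -/
def Bd (r M : ℝ) (X : List ℕ → ℂ) : Prop := ∀ κ, ‖X κ‖ ≤ M * lw r κ

lemma Bd.nonneg {r M : ℝ} {X : List ℕ → ℂ} (h : Bd r M X) : 0 ≤ M := by
  have := h []
  rw [lw_nil, mul_one] at this
  exact (norm_nonneg _).trans this

lemma K0_bd {r M : ℝ} (hr : 16 ≤ r) {X : List ℕ → ℂ} (h : Bd r M X) :
    Bd r (1 / 2 * M) (K0 X) := by
  have hr0 : 0 < r := by linarith
  have hM := h.nonneg
  intro κ
  match κ with
  | [] => simp [K0, lw_nil, hM]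
  | 0 :: κ =>
    simp only [K0, LinearMap.coe_mk, AddHom.coe_mk]
    rw [lw_cons, om_zero]
    linarith [h κ]
  | (k + 1) :: κ =>
    simp only [K0, LinearMap.coe_mk, AddHom.coe_mk]
    rw [lw_cons]
    have hw := lw_pos hr0 κ
    calc _ ≤ ∑ a ∈ range k, M * lw r (a :: (k - 1 - a) :: κ) :=
          norm_sum_le_of_le _ fun a _ => h _
      _ = M * lw r κ * ∑ a ∈ range k, om r a * om r (k - 1 - a) := by
          rw [Finset.mul_sum]
          refine Finset.sum_congr rfl fun a _ => ?_
          rw [lw_cons, lw_cons]; ring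
      _ ≤ M * lw r κ * (1 / 4 * om r (k + 1)) := by
          refine mul_le_mul_of_nonneg_left (om_conv hr k) (by positivity)
      _ ≤ _ := by
          have := om_pos hr0 (k + 1)
          have : 0 ≤ M * lw r κ * om r (k + 1) := by positivity
          linarith

lemma K1_bd {r M : ℝ} (hr : 16 ≤ r) {v j : ℕ} (hj : j < v) {X : List ℕ → ℂ} (h : Bd r M X) :
    Bd r (4 * v * r ^ v * M) (K1 j X) := by
  have hr0 : 0 < r := by linarith
  have hM := h.nonneg
  intro κ
  have hw := lw_pos hr0 κ
  match κ, hw with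
  | [], hw => simp only [K1, LinearMap.coe_mk, AddHom.coe_mk, norm_zero]; positivity
  | 0 :: κ, hw => simp only [K1, LinearMap.coe_mk, AddHom.coe_mk, norm_zero]; positivity
  | (k + 1) :: κ, _ =>
    have hw := lw_pos hr0 κ
    simp only [K1, LinearMap.coe_mk, AddHom.coe_mk]
    rw [norm_neg, norm_mul, lw_cons]
    have e : ‖(j : ℂ) + 1‖ = (j : ℝ) + 1 := by
      have : (j : ℂ) + 1 = ((j + 1 : ℕ) : ℂ) := by push_cast; ring
      rw [this, Complex.norm_natCast]; push_cast; ring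
    rw [e]
    calc _ ≤ ((j : ℝ) + 1) * (M * lw r ((k + j) :: κ)) := by
          refine mul_le_mul_of_nonneg_left (h _) (by positivity)
      _ = M * lw r κ * (((j : ℝ) + 1) * om r (k + j)) := by rw [lw_cons]; ring
      _ ≤ M * lw r κ * (4 * v * r ^ v * om r (k + 1)) :=
          mul_le_mul_of_nonneg_left (om_shift hr k j v hj) (by positivity)
      _ = _ := by ring

lemma sum_cube_le (κ : List ℕ) :
    (κ.map fun q : ℕ => (q : ℝ) * ((q : ℝ) + 1) ^ 2).sum ≤ ((κ.sum : ℝ) + 1) ^ 3 := by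
  induction κ with
  | nil => simp
  | cons k κ ih =>
    simp only [List.map_cons, List.sum_cons, Nat.cast_add]
    have h1 : (0 : ℝ) ≤ k := by positivity
    have h2 : (0 : ℝ) ≤ (κ.sum : ℝ) := by positivity
    have h3 : (0 : ℝ) ≤ k * (κ.sum : ℝ) := by positivity
    have h4 : (0 : ℝ) ≤ k * k * (κ.sum : ℝ) := by positivity
    have h5 : (0 : ℝ) ≤ k * (κ.sum : ℝ) * (κ.sum : ℝ) := by positivity
    nlinarith

lemma Bop_bd {r r' : ℝ} (hr : 16 ≤ r) (hrr : r < r') :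
    ∃ C : ℝ, 0 ≤ C ∧ ∀ (M : ℝ) (X : List ℕ → ℂ), Bd r M X → Bd r' (C * M) (Bop X) := by
  have hr0 : 0 < r := by linarith
  have hr0' : 0 < r' := by linarith
  obtain ⟨C, hC⟩ : ∃ C : ℝ, ∀ n : ℕ, ((n : ℝ) + 1) ^ 3 * (r / r') ^ n ≤ C := by
    have h1 : r / r' < 1 := by rw [div_lt_one hr0']; exact hrr
    have h0 : 0 < r / r' := by positivity
    have ht := tendsto_pow_const_mul_const_pow_of_abs_lt_one 3
      (by rw [abs_of_pos h0]; exact h1 : |r / r'| < 1)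
    have hb := ht.bddAbove_range
    obtain ⟨C, hC⟩ := hb
    refine ⟨C / (r / r'), fun n => ?_⟩
    rw [le_div_iff₀ h0]
    have := hC ⟨n + 1, rfl⟩
    simp only at this
    push_cast at this
    calc _ = ((n : ℝ) + 1) ^ 3 * (r / r') ^ (n + 1) := by ring
      _ ≤ C := this
  have hC0 : 0 ≤ C := le_trans (by positivity) (hC 0)
  refine ⟨C, hC0, fun M X h κ => ?_⟩
  have hM := h.nonneg
  match κ with
  | [] => simp only [Bop, LinearMap.coe_mk, AddHom.coe_mk, norm_zero, lw_nil]; positivity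
  | 0 :: κ =>
    have := lw_pos hr0' (0 :: κ)
    simp only [Bop, LinearMap.coe_mk, AddHom.coe_mk, norm_zero]; positivity
  | (k + 1) :: κ =>
    simp only [Bop, LinearMap.coe_mk, AddHom.coe_mk]
    have hw' := lw_pos hr0' κ
    have hw := lw_pos hr0 κ
    have ho := om_pos hr0 (k + 1)
    have key : ∀ l : Fin κ.length,
        ‖(κ[l] : ℂ) * X ((k + κ[l] - 1) :: κ.eraseIdx l)‖ ≤
        M * om r (k + 1) * lw r κ * ((κ[l] : ℝ) * ((κ[l] : ℝ) + 1) ^ 2) := by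
      intro l
      have e1 : om r κ[l] * lw r (κ.eraseIdx l) = lw r κ := by
        have := List.CommMonoid.mul_prod_eraseIdx (l := κ.map (om r)) (i := l) (by simp)
        simpa [lw, List.eraseIdx_map] using this
      have hwe := lw_pos hr0 (κ.eraseIdx l)
      rw [norm_mul, Complex.norm_natCast]
      calc _ ≤ (κ[l] : ℝ) * (M * lw r ((k + κ[l] - 1) :: κ.eraseIdx l)) :=
            mul_le_mul_of_nonneg_left (h _) (by positivity)
        _ = M * lw r (κ.eraseIdx l) * ((κ[l] : ℝ) * om r (k + κ[l] - 1)) := by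
            rw [lw_cons]; ring
        _ ≤ M * lw r (κ.eraseIdx l) *
            (κ[l] * ((κ[l] : ℝ) + 1) ^ 2 * (om r (k + 1) * om r κ[l])) :=
            mul_le_mul_of_nonneg_left (om_merge hr k _) (by positivity)
        _ = _ := by rw [← e1]; ring
    have e2 : ∑ l : Fin κ.length, ((κ[l] : ℝ) * ((κ[l] : ℝ) + 1) ^ 2) =
        (κ.map fun q : ℕ => (q : ℝ) * ((q : ℝ) + 1) ^ 2).sum := by
      rw [← Fin.sum_univ_fun_getElem]
      rfl
    calc _ ≤ ∑ l : Fin κ.length,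
          M * om r (k + 1) * lw r κ * ((κ[l] : ℝ) * ((κ[l] : ℝ) + 1) ^ 2) :=
          norm_sum_le_of_le _ fun l _ => key l
      _ = M * om r (k + 1) * lw r κ * (κ.map fun q : ℕ => (q : ℝ) * ((q : ℝ) + 1) ^ 2).sum := by
          rw [← Finset.mul_sum, e2]
      _ ≤ M * om r (k + 1) * lw r κ * ((κ.sum : ℝ) + 1) ^ 3 :=
          mul_le_mul_of_nonneg_left (sum_cube_le κ) (by positivity)
      _ = M * om r (k + 1) * lw r' κ * (((κ.sum : ℝ) + 1) ^ 3 * (r / r') ^ κ.sum) := by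
          rw [lw_scale (r := r) hr0' κ]; ring
      _ ≤ M * om r (k + 1) * lw r' κ * C :=
          mul_le_mul_of_nonneg_left (hC _) (by positivity)
      _ ≤ M * om r' (k + 1) * lw r' κ * C := by
          have := om_mono hr0 hrr.le (k + 1)
          gcongr
      _ = _ := by rw [lw_cons]; ring


/-- The transfer operator of the loop equations. -/
def Kt (v : ℕ) (t : Fin v → ℂ) (X : List ℕ → ℂ) : List ℕ → ℂ :=
  K0 X + ∑ j : Fin v, t j • K1 j X

lemma Bd.add {r M M' : ℝ} {X Y : List ℕ → ℂ} (h : Bd r M X) (h' : Bd r M' Y) :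
    Bd r (M + M') (X + Y) := fun κ => by
  rw [add_mul]; exact (norm_add_le _ _).trans (add_le_add (h κ) (h' κ))

lemma Bd.smul {r M : ℝ} {X : List ℕ → ℂ} (c : ℂ) (h : Bd r M X) :
    Bd r (‖c‖ * M) (c • X) := fun κ => by
  rw [Pi.smul_apply, norm_smul, mul_assoc]
  exact mul_le_mul_of_nonneg_left (h κ) (norm_nonneg _)

lemma Bd.sum {ι : Type*} {r : ℝ} (s : Finset ι) {M : ι → ℝ} {X : ι → List ℕ → ℂ}
    (h : ∀ i ∈ s, Bd r (M i) (X i)) : Bd r (∑ i ∈ s, M i) (∑ i ∈ s, X i) := fun κ => by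
  rw [Finset.sum_apply, Finset.sum_mul]
  exact norm_sum_le_of_le _ fun i hi => h i hi κ

lemma Bd.mono {r r' M M' : ℝ} {X : List ℕ → ℂ} (h : Bd r M X) (hr : 0 < r) (hrr : r ≤ r')
    (hM : M ≤ M') : Bd r' M' X := fun κ =>
  (h κ).trans (mul_le_mul hM (lw_mono hr hrr κ) (lw_pos hr κ).le (h.nonneg.trans hM))

lemma Kt_bd {v : ℕ} {r M : ℝ} (hr : 16 ≤ r) {t : Fin v → ℂ}
    (ht : (∑ j, ‖t j‖) * (4 * v * r ^ v) ≤ 1 / 4) {X : List ℕ → ℂ} (h : Bd r M X) :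
    Bd r (3 / 4 * M) (Kt v t X) := by
  have h1 := (K0_bd hr h).add (Bd.sum Finset.univ
    fun (j : Fin v) _ => (K1_bd hr j.2 h).smul (t j))
  refine h1.mono (by linarith) le_rfl ?_
  have hM := h.nonneg
  have e : ∑ i : Fin v, ‖t i‖ * (4 * v * r ^ v * M) =
      (∑ j, ‖t j‖) * (4 * v * r ^ v) * M := by
    rw [Finset.sum_mul, Finset.sum_mul]
    refine Finset.sum_congr rfl fun _ _ => by ring
  rw [e]
  nlinarith

lemma stability {v : ℕ} {r M d : ℝ} (hr : 16 ≤ r) {t : Fin v → ℂ}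
    (ht : (∑ j, ‖t j‖) * (4 * v * r ^ v) ≤ 1 / 4) {X F : List ℕ → ℂ} (h : Bd r M X)
    (hF : Bd r d F) (hX : X = F + Kt v t X) : Bd r (4 * d) X := by
  have hd := hF.nonneg
  have hr0 : 0 < r := by linarith
  have step : ∀ n : ℕ, Bd r ((3 / 4) ^ n * M + 4 * d) X := by
    intro n
    induction n with
    | zero => exact h.mono hr0 le_rfl (by simp; linarith)
    | succ n ih =>
      rw [hX]
      refine (hF.add (Kt_bd hr ht ih)).mono hr0 le_rfl (le_of_eq ?_)
      rw [pow_succ]; ring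
  intro κ
  have ht : Tendsto (fun n : ℕ => ((3 / 4 : ℝ) ^ n * M + 4 * d) * lw r κ) atTop
      (nhds ((0 * M + 4 * d) * lw r κ)) :=
    (((tendsto_pow_atTop_nhds_zero_of_lt_one (by norm_num) (by norm_num)).mul_const M).add_const
      _).mul_const _
  rw [zero_mul, zero_add] at ht
  exact ge_of_tendsto' ht fun n => step n κ

/-- The unweighted Banach space of bounded word functions. -/
abbrev Bsp := lp (fun _ : List ℕ => ℂ) ⊤

/-- Restoring the weight. -/
def wtd (r : ℝ) (Y : Bsp) : List ℕ → ℂ := fun κ => (lw r κ : ℂ) * Y κ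

lemma wtd_bd {r : ℝ} (hr : 0 < r) (Y : Bsp) : Bd r ‖Y‖ (wtd r Y) := fun κ => by
  unfold wtd
  rw [norm_mul, Complex.norm_real, Real.norm_of_nonneg (lw_pos hr κ).le, mul_comm]
  exact mul_le_mul_of_nonneg_right (lp.norm_apply_le_norm (by simp) Y κ) (lw_pos hr κ).le

lemma exists_wtd {r M : ℝ} (hr : 0 < r) {X : List ℕ → ℂ} (h : Bd r M X) :
    ∃ Y : Bsp, wtd r Y = X ∧ ‖Y‖ ≤ M := by
  have hb : ∀ κ, ‖X κ / (lw r κ : ℂ)‖ ≤ M := fun κ => by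
    rw [norm_div, Complex.norm_real, Real.norm_of_nonneg (lw_pos hr κ).le,
      div_le_iff₀ (lw_pos hr κ)]
    exact h κ
  refine ⟨⟨fun κ => X κ / (lw r κ : ℂ), memℓp_infty ⟨M, ?_⟩⟩, ?_, ?_⟩
  · rintro _ ⟨κ, rfl⟩; exact hb κ
  · funext κ
    have : (lw r κ : ℂ) ≠ 0 := by exact_mod_cast (lw_pos hr κ).ne'
    simp only [wtd]
    field_simp
  · exact lp.norm_le_of_forall_le h.nonneg hb

lemma wtd_inj {r : ℝ} (hr : 0 < r) {Y Y' : Bsp} (h : wtd r Y = wtd r Y') : Y = Y' := by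
  ext κ
  have := congrFun h κ
  have h0 : (lw r κ : ℂ) ≠ 0 := by exact_mod_cast (lw_pos hr κ).ne'
  exact mul_left_cancel₀ h0 this

lemma wtd_add (r : ℝ) (Y Y' : Bsp) : wtd r (Y + Y') = wtd r Y + wtd r Y' := by
  funext κ; simp [wtd, mul_add]

lemma wtd_smul (r : ℝ) (c : ℂ) (Y : Bsp) : wtd r (c • Y) = c • wtd r Y := by
  funext κ; simp [wtd, mul_left_comm]

lemma wtd_sum {ι : Type*} (r : ℝ) (s : Finset ι) (Y : ι → Bsp) :
    wtd r (∑ i ∈ s, Y i) = ∑ i ∈ s, wtd r (Y i) := by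
  classical
  induction s using Finset.induction_on with
  | empty => funext κ; simp [wtd]
  | insert a s ha ih => rw [Finset.sum_insert ha, Finset.sum_insert ha, wtd_add, ih]

/-- Transport of a weighted-bounded linear map to the Banach space. -/
lemma exists_clm {r r' C : ℝ} (hr : 0 < r) (hr' : 0 < r')
    (Φ : (List ℕ → ℂ) →ₗ[ℂ] (List ℕ → ℂ))
    (h : ∀ (M : ℝ) (X : List ℕ → ℂ), Bd r M X → Bd r' (C * M) (Φ X)) :
    ∃ L : Bsp →L[ℂ] Bsp, (∀ Y, ‖L Y‖ ≤ C * ‖Y‖) ∧ ∀ Y, wtd r' (L Y) = Φ (wtd r Y) := by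
  choose f hf hf' using fun Y : Bsp => exists_wtd hr' (h _ _ (wtd_bd hr Y))
  let L : Bsp →ₗ[ℂ] Bsp :=
    { toFun := f
      map_add' := fun Y Y' => wtd_inj hr' (by rw [wtd_add, hf, hf, hf, wtd_add, map_add])
      map_smul' := fun c Y => wtd_inj hr' (by
        rw [RingHom.id_apply, wtd_smul, hf, hf, wtd_smul, map_smul]) }
  exact ⟨L.mkContinuous C hf', hf', hf⟩

/-- The source word function. -/
def src : List ℕ → ℂ := fun κ => if κ = [] then 1 else 0

lemma src_bd {r : ℝ} (hr : 0 < r) : Bd r 1 src := fun κ => by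
  unfold src
  split_ifs with h
  · simp [h, lw_nil]
  · simpa using (lw_pos hr κ).le

lemma analyticAt_apply_clm {v : ℕ} {f : (Fin v → ℂ) → (Bsp →L[ℂ] Bsp)} {g : (Fin v → ℂ) → Bsp}
    {t : Fin v → ℂ} (hf : AnalyticAt ℂ f t) (hg : AnalyticAt ℂ g t) :
    AnalyticAt ℂ (fun t => f t (g t)) t := by
  have h := ContinuousLinearMap.analyticAt_bilinear
    (ContinuousLinearMap.id ℂ (Bsp →L[ℂ] Bsp)) (f t, g t)
  exact AnalyticAt.fun_comp (g := fun p : (Bsp →L[ℂ] Bsp) × Bsp => p.1 p.2)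
    (f := fun t => (f t, g t)) h (hf.prod hg)

/-- For each radius, the equation `X = F + K_t X` is solvable analytically. -/
lemma solve_analytic (v : ℕ) {r d : ℝ} (hr : 16 ≤ r) (hd : d * (4 * v * r ^ v) ≤ 1 / 4) :
    ∃ Rs : (Fin v → ℂ) → (Bsp →L[ℂ] Bsp),
      (∀ t, ∑ j, ‖t j‖ < d → AnalyticAt ℂ Rs t) ∧
      (∀ t, ∑ j, ‖t j‖ < d → ∀ F, wtd r (Rs t F) = wtd r F + Kt v t (wtd r (Rs t F))) := by
  have hr0 : 0 < r := by linarith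
  obtain ⟨L0, hL0, hL0'⟩ := exists_clm hr0 hr0 K0 (fun M X h => K0_bd hr h)
  choose L1 hL1 hL1' using fun j : Fin v =>
    exists_clm hr0 hr0 (K1 j) (fun M X h => K1_bd hr j.2 h)
  let L : (Fin v → ℂ) → (Bsp →L[ℂ] Bsp) := fun t => L0 + ∑ j, t j • L1 j
  have hLw : ∀ t Y, wtd r (L t Y) = Kt v t (wtd r Y) := by
    intro t Y
    simp only [L, _root_.add_apply, _root_.sum_apply,
      _root_.smul_apply, wtd_add, wtd_sum, wtd_smul, hL0', hL1', Kt]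
  have hLn : ∀ t, ∑ j, ‖t j‖ < d → ‖L t‖ < 1 := by
    intro t ht
    refine lt_of_le_of_lt (ContinuousLinearMap.opNorm_le_bound _ (by norm_num : (0:ℝ) ≤ 3 / 4)
      fun Y => ?_) (by norm_num)
    have hb : Bd r (3 / 4 * ‖Y‖) (wtd r (L t Y)) := by
      rw [hLw]
      refine Kt_bd hr (le_trans ?_ hd) (wtd_bd hr0 Y)
      exact mul_le_mul_of_nonneg_right ht.le (by positivity)
    obtain ⟨Y', h1, h2⟩ := exists_wtd hr0 hb
    rw [← wtd_inj hr0 h1]; exact h2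
  have hLa : ∀ t, AnalyticAt ℂ L t := by
    intro t
    refine analyticAt_const.add ?_
    refine Finset.analyticAt_fun_sum _ fun j _ => ?_
    exact ((ContinuousLinearMap.proj (R := ℂ) (φ := fun _ : Fin v => ℂ) j).analyticAt t).smul
      analyticAt_const
  refine ⟨fun t => Ring.inverse (1 - L t), fun t ht => ?_, fun t ht F => ?_⟩
  · have h1 : AnalyticAt ℂ (fun t => 1 - L t) t := analyticAt_const.sub (hLa t)
    have h2 := analyticAt_inverse (𝕜 := ℂ) (Units.oneSub (L t) (hLn t ht))
    exact AnalyticAt.fun_comp (by simpa using h2) h1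
  · have h3 : (1 - L t) * Ring.inverse (1 - L t) = 1 :=
      Ring.mul_inverse_cancel _ (isUnit_one_sub_of_norm_lt_one (hLn t ht))
    have h4 : Ring.inverse (1 - L t) F - L t (Ring.inverse (1 - L t) F) = F :=
      congrArg (fun A : Bsp →L[ℂ] Bsp => A F) h3
    rw [← hLw, ← wtd_add, eq_comm]
    congr 1
    exact (sub_eq_iff_eq_add.1 h4).symm

/-- Increasing radii in `[r₀, 2 r₀)`. -/
def rg (r0 : ℝ) (g : ℕ) : ℝ := r0 * (2 - (1 / 2) ^ g)

lemma rg_lt {r0 : ℝ} (h : 0 < r0) (g : ℕ) : rg r0 g < rg r0 (g + 1) := by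
  unfold rg
  have : (0 : ℝ) < (1 / 2) ^ g := by positivity
  rw [pow_succ]; nlinarith

lemma rg_ge {r0 : ℝ} (h : 0 < r0) (g : ℕ) : r0 ≤ rg r0 g := by
  unfold rg
  have : (1 / 2 : ℝ) ^ g ≤ 1 := pow_le_one₀ (by norm_num) (by norm_num)
  nlinarith

lemma rg_le {r0 : ℝ} (h : 0 < r0) (g : ℕ) : rg r0 g ≤ 2 * r0 := by
  unfold rg
  have : (0 : ℝ) < (1 / 2) ^ g := by positivity
  nlinarith

lemma dom_le {v : ℕ} {r0 d : ℝ} (h : 16 ≤ r0) (hd0 : 0 ≤ d)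
    (hd : d * (4 * v * (2 * r0) ^ v) ≤ 1 / 4) (g : ℕ) :
    d * (4 * v * (rg r0 g) ^ v) ≤ 1 / 4 := by
  refine le_trans ?_ hd
  have h1 := rg_le (by linarith : 0 < r0) g
  have h2 := rg_ge (by linarith : 0 < r0) g
  have h3 : 0 ≤ rg r0 g := by linarith
  gcongr

theorem exists_S (v : ℕ) {r0 d : ℝ} (hr : 16 ≤ r0) (hd0 : 0 ≤ d)
    (hd : d * (4 * v * (2 * r0) ^ v) ≤ 1 / 4) :
    ∃ S : ℕ → (Fin v → ℂ) → List ℕ → ℂ,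
      (∀ g t, ∃ M, Bd (rg r0 g) M (S g t)) ∧
      (∀ t, ∑ j, ‖t j‖ < d → S 0 t = src + Kt v t (S 0 t)) ∧
      (∀ g t, ∑ j, ‖t j‖ < d → S (g + 1) t = Bop (S g t) + Kt v t (S (g + 1) t)) ∧
      (∀ g t κ, ∑ j, ‖t j‖ < d → AnalyticAt ℂ (fun t => S g t κ) t) := by
  have hr0 : 0 < r0 := by linarith
  have hge := fun g => hr.trans (rg_ge hr0 g)
  have hp : ∀ g, 0 < rg r0 g := fun g => by linarith [hge g]
  choose Rs hRa hRs using fun g => solve_analytic v (hge g) (dom_le hr hd0 hd g)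
  obtain ⟨s0, hs0, -⟩ := exists_wtd (hp 0) (src_bd (hp 0))
  choose C hC hB using fun g => Bop_bd (hge g) (rg_lt hr0 g)
  choose L hL hLw using fun g => exists_clm (hp g) (hp (g + 1)) Bop (hB g)
  let St : ℕ → (Fin v → ℂ) → Bsp := fun g => Nat.rec (fun t => Rs 0 t s0)
    (fun g f t => Rs (g + 1) t (L g (f t))) g
  have hSt0 : ∀ t, St 0 t = Rs 0 t s0 := fun t => rfl
  have hSt1 : ∀ g t, St (g + 1) t = Rs (g + 1) t (L g (St g t)) := fun g t => rfl
  have hSa : ∀ g t, ∑ j, ‖t j‖ < d → AnalyticAt ℂ (St g) t := by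
    intro g
    induction g with
    | zero => intro t ht; exact analyticAt_apply_clm (hRa 0 t ht) analyticAt_const
    | succ g ih =>
      intro t ht
      exact analyticAt_apply_clm (hRa (g + 1) t ht) (((L g).analyticAt _).fun_comp (ih t ht))
  refine ⟨fun g t => wtd (rg r0 g) (St g t), fun g t => ⟨_, wtd_bd (hp g) _⟩, ?_, ?_, ?_⟩
  · intro t ht
    simp only
    conv_lhs => rw [hSt0, hRs 0 t ht, hs0]
    rw [hSt0]
  · intro g t ht
    simp only
    conv_lhs => rw [hSt1, hRs (g + 1) t ht, hLw]
  · intro g t κ ht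
    simp only [wtd]
    refine analyticAt_const.mul ?_
    have := (lp.evalCLM ℂ (fun _ : List ℕ => ℂ) κ (p := ⊤)).analyticAt (St g t)
    exact this.fun_comp (hSa g t ht)


lemma ulog_ge {u : ℝ} (h : -1 ≤ u) : -1 ≤ u * Real.log u := by
  rcases lt_or_ge 0 u with h0 | h0
  · have := Real.one_sub_inv_le_log_of_pos h0
    have h2 : u * (1 - u⁻¹) ≤ u * Real.log u := mul_le_mul_of_nonneg_left this h0.le
    have h3 : u * (1 - u⁻¹) = u - 1 := by field_simp
    linarith
  · have : Real.log u ≤ 0 := by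
      rw [← Real.log_abs]
      exact Real.log_nonpos (abs_nonneg _) (abs_le.2 ⟨h, by linarith⟩)
    nlinarith

lemma log_int_ge (y : ℝ) :
    Real.log (1 + y ^ 2) - 6 ≤ 2 * ((1 - y) * Real.log (1 - y) + y * Real.log y) := by
  rcases le_or_gt 2 y with h | h
  · have h1 : Real.log (y - 1) ≤ Real.log y := Real.log_le_log (by linarith) (by linarith)
    have h2 : Real.log (1 - y) = Real.log (y - 1) := by
      rw [← Real.log_neg_eq_log]; congr 1; ring
    have h3 : Real.log (1 + y ^ 2) ≤ Real.log (y ^ 2 * y ^ 0 * 2) :=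
      Real.log_le_log (by positivity) (by nlinarith)
    rw [pow_zero, mul_one, Real.log_mul (by positivity) (by norm_num), Real.log_pow] at h3
    have := Real.log_two_lt_d9
    rw [h2]; push_cast at h3; nlinarith
  · rcases le_or_gt y (-1) with h' | h'
    · have h1 : Real.log (-y) ≤ Real.log (1 - y) := Real.log_le_log (by linarith) (by linarith)
      rw [Real.log_neg_eq_log] at h1
      have h3 : Real.log (1 + y ^ 2) ≤ Real.log ((1 - y) ^ 2) :=
        Real.log_le_log (by positivity) (by nlinarith)
      rw [Real.log_pow] at h3
      push_cast at h3; nlinarith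
    · have h1 := ulog_ge (u := y) (by linarith)
      have h2 := ulog_ge (u := 1 - y) (by linarith)
      have h5 : 1 + y ^ 2 ≤ 5 := by nlinarith
      have h3 : Real.log ((1 + y ^ 2) ^ 2) ≤ Real.log (2 ^ 5) :=
        Real.log_le_log (by positivity) (by nlinarith [sq_nonneg y])
      rw [Real.log_pow, Real.log_pow] at h3
      have := Real.log_two_lt_d9
      push_cast at h3; linarith

lemma int_log_sub (y : ℝ) :
    ∫ s in (0 : ℝ)..1, Real.log (s - y) = (1 - y) * Real.log (1 - y) + y * Real.log y - 1 := by
  rw [intervalIntegral.integral_comp_sub_right (fun s => Real.log s) y, integral_log]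
  rw [zero_sub, Real.log_neg_eq_log]; ring

lemma ii_log_sub (y : ℝ) :
    IntervalIntegrable (fun s => Real.log (s - y)) volume 0 1 := by
  have := (intervalIntegral.intervalIntegrable_log' (a := 0 - y) (b := 1 - y)).comp_sub_right y
  simpa using this

/-- Jensen lower bound. -/
lemma prod_le_int {n : ℕ} (y : Fin n → ℝ) :
    ∏ j, (1 + y j ^ 2) ≤ Real.exp (8 * n) * ∫ s in (0 : ℝ)..1, ∏ j, (s - y j) ^ 2 := by
  set f : ℝ → ℝ := fun s => ∑ j, 2 * Real.log (s - y j) with hf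
  have hfi : IntervalIntegrable f volume 0 1 := by
    have := IntervalIntegrable.sum (μ := volume) (a := 0) (b := 1) Finset.univ
      (f := fun (j : Fin n) s => 2 * Real.log (s - y j))
      (fun j _ => (ii_log_sub (y j)).const_mul 2)
    have e : f = ∑ j : Fin n, fun s => 2 * Real.log (s - y j) := by
      funext s; simp [hf]
    rw [e]; exact this
  set m := ∫ s in (0 : ℝ)..1, f s with hm
  have hmv : m = ∑ j, 2 * ((1 - y j) * Real.log (1 - y j) + y j * Real.log (y j) - 1) := by
    rw [hm, hf, intervalIntegral.integral_finsetSum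
      (fun j _ => (ii_log_sub (y j)).const_mul 2)]
    refine Finset.sum_congr rfl fun j _ => ?_
    rw [intervalIntegral.integral_const_mul, int_log_sub]
  have hmge : ∑ j, (Real.log (1 + y j ^ 2) - 8) ≤ m := by
    rw [hmv]
    refine Finset.sum_le_sum fun j _ => ?_
    have := log_int_ge (y j)
    linarith
  have hJ : Real.exp m ≤ ∫ s in (0 : ℝ)..1, ∏ j, (s - y j) ^ 2 := by
    have e1 : ∫ s in (0 : ℝ)..1, Real.exp m * (1 + (f s - m)) = Real.exp m := by
      rw [intervalIntegral.integral_const_mul, intervalIntegral.integral_add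
        (by simp) (hfi.sub (by simp)), intervalIntegral.integral_sub hfi (by simp)]
      simp [← hm]
    rw [← e1]
    refine intervalIntegral.integral_mono_ae zero_le_one ?_ ?_ ?_
    · exact (IntervalIntegrable.add (by simp) (hfi.sub (by simp))).const_mul _
    · apply Continuous.intervalIntegrable; fun_prop
    · have hfin : (Set.range y).Finite := Set.finite_range y
      have hae : ∀ᵐ s ∂(volume : Measure ℝ), s ∉ Set.range y := by
        rw [ae_iff]
        have : {a | ¬ a ∉ Set.range y} = Set.range y := by ext; simp
        rw [this]; exact hfin.measure_zero volume
      filter_upwards [hae] with s hs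
      have hne : ∀ j, s - y j ≠ 0 := fun j h => hs ⟨j, by linarith⟩
      have e2 : ∏ j, (s - y j) ^ 2 = Real.exp (f s) := by
        rw [hf, Real.exp_sum]
        refine Finset.prod_congr rfl fun j _ => ?_
        have : 2 * Real.log (s - y j) = Real.log ((s - y j) ^ 2) := by rw [Real.log_pow]; norm_num
        rw [this, Real.exp_log (by have := hne j; positivity)]
      rw [e2]
      have e3 : f s = m + (f s - m) := by ring
      conv_rhs => rw [e3, Real.exp_add]
      have := Real.add_one_le_exp (f s - m)
      exact mul_le_mul_of_nonneg_left (by linarith) (Real.exp_pos _).le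
  have h1 : ∏ j, (1 + y j ^ 2) = Real.exp (8 * n) * Real.exp (∑ j, (Real.log (1 + y j ^ 2) - 8)) := by
    rw [← Real.exp_add, Finset.sum_sub_distrib]
    simp only [Finset.sum_const, Finset.card_univ, Fintype.card_fin, nsmul_eq_mul]
    rw [show 8 * (n : ℝ) + (∑ j, Real.log (1 + y j ^ 2) - n * 8) = ∑ j, Real.log (1 + y j ^ 2) by ring,
      Real.exp_sum]
    exact Finset.prod_congr rfl fun j _ => (Real.exp_log (by positivity)).symm
  rw [h1]
  exact mul_le_mul_of_nonneg_left ((Real.exp_le_exp.2 hmge).trans hJ) (Real.exp_pos _).le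

/-- Admissible parameters. -/
def Adm (v : ℕ) (t : ℕ → ℝ) : Prop :=
  (∀ x : ℝ, 1 ≤ |x| → 0 ≤ ∑ j ∈ Finset.Icc 1 v, t j * x ^ j) ∧
    ∑ j ∈ Finset.Icc 1 v, |t j| ≤ 1 / 2

lemma adm_small {v : ℕ} {t : ℕ → ℝ} (h : Adm v t) {x : ℝ} (hx : |x| ≤ 1) :
    |∑ j ∈ Finset.Icc 1 v, t j * x ^ j| ≤ 1 / 2 := by
  refine (Finset.abs_sum_le_sum_abs _ _).trans (le_trans ?_ h.2)
  refine Finset.sum_le_sum fun j _ => ?_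
  rw [abs_mul, abs_pow]
  exact mul_le_of_le_one_right (abs_nonneg _) (pow_le_one₀ (abs_nonneg _) hx)

lemma Vt_ge {v : ℕ} {t : ℕ → ℝ} (h : Adm v t) (x : ℝ) : x ^ 2 / 2 - 1 / 2 ≤ Vt v t x := by
  unfold Vt
  rcases le_total 1 |x| with hx | hx
  · have := h.1 x hx; linarith
  · have := abs_le.1 (adm_small h hx); linarith

lemma Vt_ge' {v : ℕ} {t : ℕ → ℝ} (h : Adm v t) {x : ℝ} (hx : 1 ≤ |x|) : x ^ 2 / 2 ≤ Vt v t x := by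
  unfold Vt
  have := h.1 x hx; linarith

lemma Vt_le {v : ℕ} {t : ℕ → ℝ} (h : Adm v t) {x : ℝ} (h0 : 0 ≤ x) (h1 : x ≤ 1) :
    Vt v t x ≤ 1 := by
  unfold Vt
  have := abs_le.1 (adm_small h (x := x) (abs_le.2 ⟨by linarith, h1⟩))
  nlinarith

lemma Vt_continuous (v : ℕ) (t : ℕ → ℝ) : Continuous (Vt v t) := by
  unfold Vt; fun_prop

lemma sub_sq_le (x y : ℝ) : (x - y) ^ 2 ≤ (1 + x ^ 2) * (1 + y ^ 2) := by
  nlinarith [sq_nonneg (1 + x * y)]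

lemma one_add_sq_exp {x : ℝ} (hx : 16 ≤ |x|) :
    (1 + x ^ 2) * Real.exp 9 ≤ Real.exp (x ^ 2 / 4) := by
  have h1 := Real.add_one_le_exp ((1 + x ^ 2) / 8 - 1)
  have h8 : (8 : ℝ) ≤ Real.exp 3 := by
    have := Real.add_one_le_exp (1 : ℝ)
    have e : Real.exp 3 = Real.exp 1 ^ 3 := by rw [← Real.exp_nat_mul]; norm_num
    rw [e]
    calc (8 : ℝ) = 2 ^ 3 := by norm_num
      _ ≤ _ := by gcongr; linarith
  have h2 : 1 + x ^ 2 ≤ Real.exp 3 * Real.exp ((1 + x ^ 2) / 8 - 1) := by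
    have := mul_le_mul h8 h1 (by nlinarith [sq_nonneg x]) (Real.exp_pos _).le
    linarith
  have hx2 : 256 ≤ x ^ 2 := by rw [← sq_abs]; nlinarith
  calc (1 + x ^ 2) * Real.exp 9 ≤ Real.exp 3 * Real.exp ((1 + x ^ 2) / 8 - 1) * Real.exp 9 := by
        gcongr
    _ = Real.exp (3 + ((1 + x ^ 2) / 8 - 1) + 9) := by rw [Real.exp_add, Real.exp_add]
    _ ≤ _ := Real.exp_le_exp.2 (by linarith)

/-- Key large-deviation lemma. -/
lemma key_ineq {v n : ℕ} {t : ℕ → ℝ} (h : Adm v t) {x : ℝ} (hx : 16 ≤ |x|) (y : Fin n → ℝ) :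
    Real.exp (-((n + 1 : ℕ) : ℝ) * Vt v t x) * ∏ j, (x - y j) ^ 2 ≤
      Real.exp (-((n + 1 : ℕ) : ℝ) * (x ^ 2 / 4)) *
        ∫ s in (0 : ℝ)..1, Real.exp (-((n + 1 : ℕ) : ℝ) * Vt v t s) * ∏ j, (s - y j) ^ 2 := by
  set N : ℝ := ((n + 1 : ℕ) : ℝ) with hN
  have hNn : N = n + 1 := by simp [hN]
  have hN0 : 0 ≤ N := by positivity
  have hI0 : 0 ≤ ∫ s in (0 : ℝ)..1, ∏ j, (s - y j) ^ 2 :=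
    intervalIntegral.integral_nonneg zero_le_one fun s _ => Finset.prod_nonneg fun j _ => sq_nonneg _
  have h1 : Real.exp (-N) * ∫ s in (0 : ℝ)..1, ∏ j, (s - y j) ^ 2 ≤
      ∫ s in (0 : ℝ)..1, Real.exp (-N * Vt v t s) * ∏ j, (s - y j) ^ 2 := by
    rw [← intervalIntegral.integral_const_mul]
    have hc := Vt_continuous v t
    refine intervalIntegral.integral_mono_on zero_le_one ?_ ?_ ?_
    · apply Continuous.intervalIntegrable; fun_prop
    · apply Continuous.intervalIntegrable; fun_prop
    · intro s hs
      refine mul_le_mul_of_nonneg_right (Real.exp_le_exp.2 ?_)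
        (Finset.prod_nonneg fun j _ => sq_nonneg _)
      have := Vt_le h hs.1 hs.2
      nlinarith
  have h2 : ∏ j, (x - y j) ^ 2 ≤ (1 + x ^ 2) ^ n * ∏ j, (1 + y j ^ 2) := by
    have : (1 + x ^ 2) ^ n * ∏ j, (1 + y j ^ 2) = ∏ j, ((1 + x ^ 2) * (1 + y j ^ 2)) := by
      rw [Finset.prod_mul_distrib]; simp
    rw [this]
    exact Finset.prod_le_prod (fun j _ => sq_nonneg _) fun j _ => sub_sq_le _ _
  have h3 := prod_le_int y
  have h4 : Real.exp (-N * Vt v t x) ≤ Real.exp (-N * (x ^ 2 / 2)) := by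
    refine Real.exp_le_exp.2 ?_
    have := Vt_ge' h (x := x) (by linarith)
    nlinarith
  have h5 : (1 + x ^ 2) ^ n * Real.exp (8 * n) * Real.exp N ≤ Real.exp (N * (x ^ 2 / 4)) := by
    have e1 : Real.exp (8 * n) * Real.exp N ≤ Real.exp 9 ^ (n + 1) := by
      rw [← Real.exp_add, ← Real.exp_nat_mul]
      refine Real.exp_le_exp.2 ?_
      rw [hNn]; push_cast; linarith
    have e2 : (1 + x ^ 2) ^ n ≤ (1 + x ^ 2) ^ (n + 1) :=
      pow_le_pow_right₀ (by nlinarith [sq_nonneg x]) (by omega)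
    calc _ = (1 + x ^ 2) ^ n * (Real.exp (8 * n) * Real.exp N) := by ring
      _ ≤ (1 + x ^ 2) ^ (n + 1) * Real.exp 9 ^ (n + 1) := by gcongr
      _ = ((1 + x ^ 2) * Real.exp 9) ^ (n + 1) := by rw [mul_pow]
      _ ≤ Real.exp (x ^ 2 / 4) ^ (n + 1) := by
          gcongr; exact one_add_sq_exp hx
      _ = _ := by rw [← Real.exp_nat_mul]
  set I := ∫ s in (0 : ℝ)..1, ∏ j, (s - y j) ^ 2 with hI
  calc _ ≤ Real.exp (-N * (x ^ 2 / 2)) * ((1 + x ^ 2) ^ n * (Real.exp (8 * n) * I)) := by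
        refine mul_le_mul h4 (h2.trans ?_) (Finset.prod_nonneg fun j _ => sq_nonneg _)
          (Real.exp_pos _).le
        exact mul_le_mul_of_nonneg_left h3 (by positivity)
    _ = Real.exp (-N * (x ^ 2 / 2)) * ((1 + x ^ 2) ^ n * Real.exp (8 * n) * Real.exp N) *
          (Real.exp (-N) * I) := by
        have : Real.exp N * Real.exp (-N) = 1 := by rw [← Real.exp_add]; simp
        linear_combination (-Real.exp (-N * (x ^ 2 / 2)) * (1 + x ^ 2) ^ n * Real.exp (8 * n) * I) * this
    _ ≤ Real.exp (-N * (x ^ 2 / 2)) * Real.exp (N * (x ^ 2 / 4)) * (Real.exp (-N) * I) := by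
        gcongr
    _ = Real.exp (-N * (x ^ 2 / 4)) * (Real.exp (-N) * I) := by
        rw [← Real.exp_add]; congr 2; ring
    _ ≤ _ := mul_le_mul_of_nonneg_left h1 (Real.exp_pos _).le


lemma filt_prod {N : ℕ} (f : Fin N → Fin N → ℝ) :
    ∏ p ∈ Finset.univ.filter (fun p : Fin N × Fin N => p.1 < p.2), f p.1 p.2 =
      ∏ p, ∏ q, if p < q then f p q else 1 := by
  rw [Finset.prod_filter, Fintype.prod_prod_type]

lemma filt_insert {n : ℕ} (i : Fin (n + 1)) (f : Fin (n + 1) → Fin (n + 1) → ℝ)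
    (hf : ∀ p q, f p q = f q p) :
    ∏ p ∈ Finset.univ.filter (fun p : Fin (n + 1) × Fin (n + 1) => p.1 < p.2), f p.1 p.2 =
      (∏ j, f i (i.succAbove j)) *
      ∏ p ∈ Finset.univ.filter (fun p : Fin n × Fin n => p.1 < p.2),
        f (i.succAbove p.1) (i.succAbove p.2) := by
  rw [filt_prod, filt_prod (fun p q => f (i.succAbove p) (i.succAbove q)),
    Fin.prod_univ_succAbove _ i, Fin.prod_univ_succAbove _ i]
  have h1 : ∀ p : Fin n, (∏ q, if i.succAbove p < q then f (i.succAbove p) q else 1) =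
      (if i.succAbove p < i then f i (i.succAbove p) else 1) *
      ∏ q : Fin n, if p < q then f (i.succAbove p) (i.succAbove q) else 1 := by
    intro p
    rw [Fin.prod_univ_succAbove _ i]
    congr 1
    · rw [hf]
    · refine Finset.prod_congr rfl fun q _ => ?_
      simp
  rw [Finset.prod_congr rfl fun p _ => h1 p, Finset.prod_mul_distrib, ← mul_assoc]
  congr 1
  simp only [lt_irrefl, if_false, one_mul]
  rw [← Finset.prod_mul_distrib]
  refine Finset.prod_congr rfl fun j _ => ?_
  rcases lt_or_gt_of_ne (Fin.succAbove_ne i j) with h | h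
  · simp [h, h.not_gt]
  · simp [h, h.not_gt]

/-- The density of the remaining eigenvalues. -/
def rest (v n : ℕ) (t : ℕ → ℝ) (y : Fin n → ℝ) : ℝ :=
  (∏ p ∈ Finset.univ.filter (fun p : Fin n × Fin n => p.1 < p.2), (y p.1 - y p.2) ^ 2) *
    Real.exp (-((n + 1 : ℕ) : ℝ) * ∑ i, Vt v t (y i))

lemma rest_nonneg (v n : ℕ) (t : ℕ → ℝ) (y : Fin n → ℝ) : 0 ≤ rest v n t y :=
  mul_nonneg (Finset.prod_nonneg fun _ _ => sq_nonneg _) (Real.exp_pos _).le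

lemma dens_nonneg (v N : ℕ) (t : ℕ → ℝ) (y : Fin N → ℝ) : 0 ≤ dens v N t y :=
  mul_nonneg (Finset.prod_nonneg fun _ _ => sq_nonneg _) (Real.exp_pos _).le

lemma dens_continuous (v N : ℕ) (t : ℕ → ℝ) : Continuous (dens v N t) := by
  have := Vt_continuous v t
  unfold dens; fun_prop

lemma dens_insert (v n : ℕ) (t : ℕ → ℝ) (i : Fin (n + 1)) (x : ℝ) (y : Fin n → ℝ) :
    dens v (n + 1) t (i.insertNth x y) =
      (Real.exp (-((n + 1 : ℕ) : ℝ) * Vt v t x) * ∏ j, (x - y j) ^ 2) * rest v n t y := by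
  unfold dens rest
  rw [filt_insert i (fun p q => ((i.insertNth x y : Fin (n + 1) → ℝ) p -
    (i.insertNth x y : Fin (n + 1) → ℝ) q) ^ 2) (fun p q => by ring), Fin.sum_univ_succAbove _ i]
  simp only [Fin.insertNth_apply_same, Fin.insertNth_apply_succAbove]
  rw [mul_add, Real.exp_add]; ring

lemma dens_key {v n : ℕ} {t : ℕ → ℝ} (h : Adm v t) (i : Fin (n + 1)) {x : ℝ} (hx : 16 ≤ |x|)
    (y : Fin n → ℝ) :
    ENNReal.ofReal (dens v (n + 1) t (i.insertNth x y)) ≤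
      ENNReal.ofReal (Real.exp (-((n + 1 : ℕ) : ℝ) * (x ^ 2 / 4))) *
        ∫⁻ s in Set.Icc (0 : ℝ) 1, ENNReal.ofReal (dens v (n + 1) t (i.insertNth s y)) := by
  have hc : Continuous fun s : ℝ => dens v (n + 1) t (i.insertNth s y) :=
    (dens_continuous v (n + 1) t).comp (Continuous.finInsertNth i continuous_id continuous_const)
  rw [← ofReal_integral_eq_lintegral_ofReal (hc.integrableOn_Icc)
    (Eventually.of_forall fun s => dens_nonneg _ _ _ _), ← ENNReal.ofReal_mul (Real.exp_pos _).le]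
  refine ENNReal.ofReal_le_ofReal ?_
  rw [integral_Icc_eq_integral_Ioc, ← intervalIntegral.integral_of_le zero_le_one]
  simp only [dens_insert]
  rw [intervalIntegral.integral_mul_const, ← mul_assoc]
  exact mul_le_mul_of_nonneg_right (key_ineq h hx y) (rest_nonneg _ _ _ _)

/-- Fubini in the form used below. -/
lemma lint_insert {n : ℕ} (i : Fin (n + 1)) {f : (Fin (n + 1) → ℝ) → ENNReal} (hf : Measurable f) :
    ∫⁻ x, f x = ∫⁻ y : Fin n → ℝ, ∫⁻ s : ℝ, f (i.insertNth s y) := by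
  have h := (volume_preserving_piFinSuccAbove (fun _ : Fin (n + 1) => ℝ) i).symm
  have h1 := h.lintegral_comp_emb (MeasurableEquiv.measurableEmbedding _) f
  rw [← h1]
  have h2 := lintegral_prod_symm (μ := (volume : Measure ℝ)) (ν := (volume : Measure (Fin n → ℝ)))
    (fun a => f ((MeasurableEquiv.piFinSuccAbove (fun _ : Fin (n + 1) => ℝ) i).symm a))
    ((hf.comp (MeasurableEquiv.measurable _)).aemeasurable)
  exact h2

lemma one_dim_integrable (M : ℕ) {b : ℝ} (hb : 0 < b) :
    Integrable (fun x : ℝ => (1 + x ^ 2) ^ M * Real.exp (-b * x ^ 2)) := by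
  have h1 := (integrable_exp_neg_mul_sq (half_pos hb)).const_mul
    (Real.exp (b / 2) * (M.factorial : ℝ) * ((b / 2) ^ M)⁻¹)
  refine h1.mono' (by apply Continuous.aestronglyMeasurable; fun_prop) (Eventually.of_forall fun x => ?_)
  rw [Real.norm_of_nonneg (by positivity)]
  have h2 := Real.pow_div_factorial_le_exp (b / 2 * (1 + x ^ 2)) (by positivity) M
  rw [div_le_iff₀ (by positivity), mul_pow] at h2
  have h3 : (1 + x ^ 2) ^ M ≤ ((b / 2) ^ M)⁻¹ * (Real.exp (b / 2 * (1 + x ^ 2)) * M.factorial) := by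
    rw [← div_eq_inv_mul, le_div_iff₀ (by positivity)]; linarith
  calc _ ≤ ((b / 2) ^ M)⁻¹ * (Real.exp (b / 2 * (1 + x ^ 2)) * M.factorial) * Real.exp (-b * x ^ 2) := by
        gcongr
    _ = ((b / 2) ^ M)⁻¹ * M.factorial * (Real.exp (b / 2 * (1 + x ^ 2)) * Real.exp (-b * x ^ 2)) := by ring
    _ = ((b / 2) ^ M)⁻¹ * M.factorial * (Real.exp (b / 2) * Real.exp (-(b / 2) * x ^ 2)) := by
        rw [← Real.exp_add, ← Real.exp_add]; congr 2; ring
    _ = _ := by ring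

lemma dens_integrable {v N : ℕ} {t : ℕ → ℝ} (h : Adm v t) (hN : 1 ≤ N) :
    Integrable (dens v N t) := by
  have hN' : (0 : ℝ) < N := by exact_mod_cast hN
  have h1 : Integrable (fun x : Fin N → ℝ => ∏ i, (Real.exp (N / 2) *
      ((1 + x i ^ 2) ^ (2 * N) * Real.exp (-(N / 2 : ℝ) * x i ^ 2)))) :=
    Integrable.fintype_prod (μ := fun _ => volume)
      (f := fun (_ : Fin N) (x : ℝ) => Real.exp (N / 2) *
      ((1 + x ^ 2) ^ (2 * N) * Real.exp (-(N / 2 : ℝ) * x ^ 2)))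
      fun i => (one_dim_integrable (2 * N) (b := N / 2) (by positivity)).const_mul _
  refine h1.mono' (dens_continuous v N t).aestronglyMeasurable (Eventually.of_forall fun x => ?_)
  rw [Real.norm_of_nonneg (dens_nonneg _ _ _ _)]
  have e1 : ∏ p ∈ Finset.univ.filter (fun p : Fin N × Fin N => p.1 < p.2), (x p.1 - x p.2) ^ 2 ≤
      ∏ i, (1 + x i ^ 2) ^ (2 * N) := by
    rw [filt_prod (fun p q => (x p - x q) ^ 2)]
    have e2 : ∏ i, (1 + x i ^ 2) ^ (2 * N) = ∏ p : Fin N, ∏ q : Fin N, ((1 + x p ^ 2) * (1 + x q ^ 2)) := by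
      simp only [Finset.prod_mul_distrib, Finset.prod_const, Finset.card_univ, Fintype.card_fin,
        two_mul, pow_add, Finset.prod_pow]
    rw [e2]
    refine Finset.prod_le_prod (fun p _ => Finset.prod_nonneg fun q _ => by split_ifs <;> positivity)
      fun p _ => Finset.prod_le_prod (fun q _ => by split_ifs <;> positivity) fun q _ => ?_
    split_ifs
    · exact sub_sq_le _ _
    · nlinarith [sq_nonneg (x p), sq_nonneg (x q), mul_nonneg (sq_nonneg (x p)) (sq_nonneg (x q))]
  have e3 : Real.exp (-(N : ℝ) * ∑ i, Vt v t (x i)) ≤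
      ∏ i, (Real.exp (N / 2) * Real.exp (-(N / 2 : ℝ) * x i ^ 2)) := by
    rw [Finset.mul_sum, Real.exp_sum]
    refine Finset.prod_le_prod (fun i _ => (Real.exp_pos _).le) fun i _ => ?_
    rw [← Real.exp_add]
    refine Real.exp_le_exp.2 ?_
    have := Vt_ge h (x i)
    nlinarith
  calc _ ≤ (∏ i, (1 + x i ^ 2) ^ (2 * N)) *
        ∏ i, (Real.exp (N / 2) * Real.exp (-(N / 2 : ℝ) * x i ^ 2)) :=
        mul_le_mul e1 e3 (Real.exp_pos _).le (Finset.prod_nonneg fun i _ => by positivity)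
    _ = _ := by
        rw [← Finset.prod_mul_distrib]
        exact Finset.prod_congr rfl fun i _ => by ring

/-- The box. -/
def Bx (N : ℕ) : Set (Fin N → ℝ) := Set.Icc (fun _ => -16) (fun _ => 16)

/-- The partition function on the box. -/
def Zb (v N : ℕ) (t : ℕ → ℝ) : ℝ := ∫ x in Bx N, dens v N t x

lemma mem_Bx {N : ℕ} {x : Fin N → ℝ} : x ∈ Bx N ↔ ∀ i, |x i| ≤ 16 := by
  simp only [Bx, Set.mem_Icc, Pi.le_def, abs_le, forall_and]

lemma Bx_meas (N : ℕ) : MeasurableSet (Bx N) := measurableSet_Icc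

lemma Bx_compact (N : ℕ) : IsCompact (Bx N) := isCompact_Icc

lemma dens_intOn (v N : ℕ) (t : ℕ → ℝ) : IntegrableOn (dens v N t) (Bx N) :=
  (dens_continuous v N t).continuousOn.integrableOn_compact (Bx_compact N)

lemma Zb_pos (v N : ℕ) (t : ℕ → ℝ) : 0 < Zb v N t := by
  unfold Zb
  rw [setIntegral_pos_iff_support_of_nonneg_ae (Eventually.of_forall fun x => dens_nonneg _ _ _ _)
    (dens_intOn v N t)]
  have hop : IsOpen (Function.support (dens v N t) ∩ {x | ∀ i, |x i| < 16}) := by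
    refine IsOpen.inter ((dens_continuous v N t).isOpen_support) ?_
    rw [Set.ofPred_forall]
    refine isOpen_iInter_of_finite fun i => isOpen_lt (by fun_prop) continuous_const
  have hne : (Function.support (dens v N t) ∩ {x | ∀ i, |x i| < 16}).Nonempty := by
    refine ⟨fun i => (i : ℝ) / N, ?_, fun i => ?_⟩
    · rw [Function.mem_support]
      refine mul_ne_zero ?_ (Real.exp_ne_zero _)
      rw [Finset.prod_ne_zero_iff]
      rintro ⟨p, q⟩ hpq
      simp only [Finset.mem_filter, Finset.mem_univ, true_and] at hpq
      have hN : (0 : ℝ) < N := by exact_mod_cast p.pos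
      have : (p : ℝ) < q := by exact_mod_cast hpq
      refine pow_ne_zero _ (sub_ne_zero.2 (ne_of_lt ?_))
      simp only
      gcongr
    · have hN : (0 : ℝ) < N := by exact_mod_cast i.pos
      have : (i : ℝ) < N := by exact_mod_cast i.2
      rw [abs_of_nonneg (by positivity), div_lt_iff₀ hN]; linarith
  refine (hop.measure_pos volume hne).trans_le (measure_mono ?_)
  exact Set.inter_subset_inter_right _ fun x hx => mem_Bx.2 fun i => (hx i).le

lemma face_bound {v n : ℕ} {t : ℕ → ℝ} (h : Adm v t) (i : Fin (n + 1)) {x : ℝ} (hx : |x| = 16) :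
    ∫ y in Bx n, dens v (n + 1) t (i.insertNth x y) ≤
      Real.exp (-64 * ((n + 1 : ℕ) : ℝ)) * Zb v (n + 1) t := by
  have hc : Continuous fun y : Fin n → ℝ => dens v (n + 1) t (i.insertNth x y) :=
    (dens_continuous v (n + 1) t).comp (Continuous.finInsertNth i continuous_const continuous_id)
  have hi := hc.continuousOn.integrableOn_compact (μ := volume) (Bx_compact n)
  rw [← ENNReal.ofReal_le_ofReal_iff (mul_nonneg (Real.exp_pos _).le (Zb_pos v _ t).le),
    ENNReal.ofReal_mul (Real.exp_pos _).le, Zb,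
    ofReal_integral_eq_lintegral_ofReal hi (Eventually.of_forall fun s => dens_nonneg _ _ _ _),
    ofReal_integral_eq_lintegral_ofReal (dens_intOn _ _ _)
      (Eventually.of_forall fun s => dens_nonneg _ _ _ _), ← lintegral_indicator (Bx_meas _),
    ← lintegral_indicator (Bx_meas _)]
  have hm : Measurable fun z => ENNReal.ofReal (dens v (n + 1) t z) :=
    (dens_continuous v (n + 1) t).measurable.ennreal_ofReal
  rw [lint_insert i (hm.indicator (Bx_meas _)), ← lintegral_const_mul' _ _ ENNReal.ofReal_ne_top]
  refine lintegral_mono fun y => ?_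
  by_cases hy : y ∈ Bx n
  · rw [Set.indicator_of_mem hy]
    refine (dens_key h i hx.ge y).trans ?_
    have e : -((n + 1 : ℕ) : ℝ) * (x ^ 2 / 4) = -64 * ((n + 1 : ℕ) : ℝ) := by
      rw [← sq_abs, hx]; ring
    rw [e]
    refine mul_le_mul' le_rfl ?_
    rw [← lintegral_indicator measurableSet_Icc]
    refine lintegral_mono fun s => ?_
    by_cases hs : s ∈ Set.Icc (0 : ℝ) 1
    · have : i.insertNth s y ∈ Bx (n + 1) := by
        rw [mem_Bx, Fin.forall_iff_succAbove i]
        simp only [Fin.insertNth_apply_same, Fin.insertNth_apply_succAbove]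
        refine ⟨?_, mem_Bx.1 hy⟩
        rw [abs_of_nonneg hs.1]; linarith [hs.2]
      rw [Set.indicator_of_mem hs, Set.indicator_of_mem this]
    · rw [Set.indicator_of_notMem hs]; exact zero_le
  · rw [Set.indicator_of_notMem hy]; exact zero_le

lemma tail_one {v n : ℕ} {t : ℕ → ℝ} (h : Adm v t) (i : Fin (n + 1)) :
    ∫ x in {x : Fin (n + 1) → ℝ | 16 < |x i|}, dens v (n + 1) t x ≤
      6 * Real.exp (-32 * ((n + 1 : ℕ) : ℝ)) * Z v (n + 1) t := by
  set N : ℝ := ((n + 1 : ℕ) : ℝ) with hN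
  have hN1 : 1 ≤ N := by rw [hN]; push_cast; linarith [Nat.cast_nonneg (α := ℝ) n]
  have hI := dens_integrable h (N := n + 1) (by omega)
  have hZ0 : 0 ≤ Z v (n + 1) t := integral_nonneg fun x => dens_nonneg _ _ _ _
  have hS : MeasurableSet {x : Fin (n + 1) → ℝ | 16 < |x i|} :=
    measurableSet_lt measurable_const (by fun_prop)
  rw [← ENNReal.ofReal_le_ofReal_iff (by positivity),
    ENNReal.ofReal_mul (by positivity), Z,
    ofReal_integral_eq_lintegral_ofReal hI.integrableOn (Eventually.of_forall fun s => dens_nonneg _ _ _ _),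
    ofReal_integral_eq_lintegral_ofReal hI
      (Eventually.of_forall fun s => dens_nonneg _ _ _ _), ← lintegral_indicator hS]
  have hm : Measurable fun z => ENNReal.ofReal (dens v (n + 1) t z) :=
    (dens_continuous v (n + 1) t).measurable.ennreal_ofReal
  rw [lint_insert i (hm.indicator hS), lint_insert i hm,
    ← lintegral_const_mul' _ _ ENNReal.ofReal_ne_top]
  refine lintegral_mono fun y => ?_
  have hg : ∫⁻ s : ℝ, ENNReal.ofReal (Real.exp (-32 * N) * Real.exp (-(1 / 8 : ℝ) * s ^ 2)) ≤
      ENNReal.ofReal (6 * Real.exp (-32 * N)) := by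
    have hgi := (integrable_exp_neg_mul_sq (b := 1 / 8) (by norm_num)).const_mul (Real.exp (-32 * N))
    rw [← ofReal_integral_eq_lintegral_ofReal hgi (Eventually.of_forall fun s => by positivity),
      integral_const_mul, integral_gaussian]
    refine ENNReal.ofReal_le_ofReal ?_
    rw [mul_comm]
    refine mul_le_mul_of_nonneg_right ?_ (Real.exp_pos _).le
    rw [Real.sqrt_le_left (by norm_num)]
    have := Real.pi_lt_four
    linarith
  calc _ ≤ ∫⁻ s : ℝ, ENNReal.ofReal (Real.exp (-32 * N) * Real.exp (-(1 / 8 : ℝ) * s ^ 2)) *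
        ∫⁻ s, ENNReal.ofReal (dens v (n + 1) t (i.insertNth s y)) := by
        refine lintegral_mono fun s => ?_
        by_cases hs : 16 < |s|
        · rw [Set.indicator_of_mem (by simpa using hs)]
          refine (dens_key h i hs.le y).trans (mul_le_mul' (ENNReal.ofReal_le_ofReal ?_)
            (setLIntegral_le_lintegral _ _))
          rw [← Real.exp_add]
          refine Real.exp_le_exp.2 ?_
          have : 256 ≤ s ^ 2 := by rw [← sq_abs]; nlinarith
          rw [← hN]
          nlinarith
        · rw [Set.indicator_of_notMem (by simpa using hs)]; exact zero_le
    _ = _ := by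
        rw [lintegral_mul_const _ (by fun_prop)]
    _ ≤ _ := mul_le_mul' hg le_rfl

lemma Zb_le_Z {v N : ℕ} {t : ℕ → ℝ} (h : Adm v t) (hN : 1 ≤ N) : Zb v N t ≤ Z v N t :=
  setIntegral_le_integral (dens_integrable h hN) (Eventually.of_forall fun _ => dens_nonneg _ _ _ _)

lemma Z_pos {v N : ℕ} {t : ℕ → ℝ} (h : Adm v t) (hN : 1 ≤ N) : 0 < Z v N t :=
  (Zb_pos v N t).trans_le (Zb_le_Z h hN)

lemma tail_all {v N : ℕ} {t : ℕ → ℝ} (h : Adm v t) (hN : 1 ≤ N) :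
    Z v N t - Zb v N t ≤ N * (6 * Real.exp (-32 * (N : ℝ)) * Z v N t) := by
  obtain ⟨n, rfl⟩ : ∃ n, N = n + 1 := ⟨N - 1, by omega⟩
  have hI := dens_integrable h hN
  have h1 : Z v (n + 1) t - Zb v (n + 1) t = ∫ x in (Bx (n + 1))ᶜ, dens v (n + 1) t x := by
    have := integral_add_compl (Bx_meas (n + 1)) hI
    unfold Z Zb; linarith
  have hS : ∀ i, MeasurableSet {x : Fin (n + 1) → ℝ | 16 < |x i|} := fun i =>
    measurableSet_lt measurable_const (by fun_prop)
  rw [h1, ← integral_indicator (Bx_meas _).compl]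
  calc _ ≤ ∫ x, ∑ i : Fin (n + 1), Set.indicator {x : Fin (n + 1) → ℝ | 16 < |x i|} (dens v (n + 1) t) x := by
        refine integral_mono (hI.indicator (Bx_meas _).compl)
          (integrable_finsetSum _ fun i _ => hI.indicator (hS i)) fun x => ?_
        have hnn : ∀ i, 0 ≤ Set.indicator {x : Fin (n + 1) → ℝ | 16 < |x i|} (dens v (n + 1) t) x :=
          fun i => Set.indicator_nonneg (fun x _ => dens_nonneg _ _ _ _) x
        by_cases hx : x ∈ Bx (n + 1)
        · rw [Set.indicator_of_notMem (by simpa using hx)]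
          exact Finset.sum_nonneg fun i _ => hnn i
        · rw [Set.indicator_of_mem (by simpa using hx)]
          rw [mem_Bx] at hx
          push Not at hx
          obtain ⟨i, hi⟩ := hx
          have := Finset.single_le_sum (fun i _ => hnn i) (Finset.mem_univ i)
          rwa [Set.indicator_of_mem (by simpa using hi)] at this
    _ = ∑ i : Fin (n + 1), ∫ x in {x : Fin (n + 1) → ℝ | 16 < |x i|}, dens v (n + 1) t x := by
        rw [integral_finsetSum _ fun i _ => hI.indicator (hS i)]
        exact Finset.sum_congr rfl fun i _ => integral_indicator (hS i)
    _ ≤ ∑ i : Fin (n + 1), 6 * Real.exp (-32 * ((n + 1 : ℕ) : ℝ)) * Z v (n + 1) t :=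
        Finset.sum_le_sum fun i _ => tail_one h i
    _ = _ := by simp [mul_assoc]

lemma log_Z_Zb {v N : ℕ} {t : ℕ → ℝ} (h : Adm v t) (hN : 1 ≤ N) :
    |Real.log (Z v N t) - Real.log (Zb v N t)| ≤ 12 * N * Real.exp (-32 * (N : ℝ)) := by
  have hN' : (1 : ℝ) ≤ N := by exact_mod_cast hN
  have hz := Z_pos h hN
  have hb := Zb_pos v N t
  have hle := Zb_le_Z h hN
  have ht := tail_all h hN
  have hlog : Real.log (Zb v N t) ≤ Real.log (Z v N t) := Real.log_le_log hb hle
  rw [abs_of_nonneg (by linarith)]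
  have hsmall : 12 * N * Real.exp (-32 * (N : ℝ)) ≤ 1 := by
    have h1 := Real.add_one_le_exp (32 * (N : ℝ))
    rw [show -32 * (N : ℝ) = -(32 * (N : ℝ)) by ring, Real.exp_neg, mul_inv_le_iff₀ (Real.exp_pos _)]
    linarith
  have h2 : Z v N t ≤ 2 * Zb v N t := by nlinarith
  have h3 : Real.log (Z v N t) - Real.log (Zb v N t) ≤ Z v N t / Zb v N t - 1 := by
    rw [← Real.log_div hz.ne' hb.ne']
    exact Real.log_le_sub_one_of_pos (div_pos hz hb)
  refine h3.trans ?_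
  rw [div_sub_one hb.ne', div_le_iff₀ hb]
  have hp : 0 ≤ N * (6 * Real.exp (-32 * (N : ℝ))) := by positivity
  nlinarith


/-- Normalised power sums. -/
def pw (N k : ℕ) (x : Fin N → ℝ) : ℝ := (∑ i, x i ^ k) / N

/-- Products of normalised power sums. -/
def GG (N : ℕ) : List ℕ → (Fin N → ℝ) → ℝ
  | [], _ => 1
  | k :: κ, x => pw N k x * GG N κ x

lemma pw_contDiff (N k : ℕ) : ContDiff ℝ 1 (pw N k) := by
  unfold pw; fun_prop

lemma GG_contDiff (N : ℕ) (κ : List ℕ) : ContDiff ℝ 1 (GG N κ) := by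
  induction κ with
  | nil => exact contDiff_const
  | cons k κ ih => exact (pw_contDiff N k).mul ih

lemma Vt_contDiff (v : ℕ) (t : ℕ → ℝ) : ContDiff ℝ 1 (Vt v t) := by
  unfold Vt; fun_prop

lemma dens_contDiff (v N : ℕ) (t : ℕ → ℝ) : ContDiff ℝ 1 (dens v N t) := by
  have := Vt_contDiff v t
  unfold dens; fun_prop

lemma pw_bound {N k : ℕ} {x : Fin N → ℝ} (hx : x ∈ Bx N) : |pw N k x| ≤ 16 ^ k := by
  unfold pw
  rw [abs_div, Nat.abs_cast]
  refine div_le_of_le_mul₀ (by positivity) (by positivity) ?_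
  refine (Finset.abs_sum_le_sum_abs _ _).trans ?_
  calc _ ≤ ∑ i : Fin N, (16 : ℝ) ^ k := Finset.sum_le_sum fun i _ => by
        rw [abs_pow]; exact pow_le_pow_left₀ (abs_nonneg _) (mem_Bx.1 hx i) _
    _ = _ := by simp [mul_comm]

lemma GG_bound {N : ℕ} (κ : List ℕ) {x : Fin N → ℝ} (hx : x ∈ Bx N) :
    |GG N κ x| ≤ 16 ^ κ.sum := by
  induction κ with
  | nil => simp [GG]
  | cons k κ ih =>
    rw [GG, abs_mul, List.sum_cons, pow_add]
    exact mul_le_mul (pw_bound hx) ih (abs_nonneg _) (by positivity)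

lemma line_deriv {N : ℕ} (x w : Fin N → ℝ) (i : Fin N) :
    HasDerivAt (fun s : ℝ => (x + s • w) i) (w i) 0 := by
  have := ((hasDerivAt_id (0 : ℝ)).mul_const (w i)).const_add (x i)
  simpa using this

lemma pw_deriv {N : ℕ} (k m : ℕ) (x : Fin N → ℝ) :
    HasDerivAt (fun s : ℝ => pw N m (x + s • fun i => x i ^ k)) (m * pw N (k + m - 1) x) 0 := by
  unfold pw
  have h : HasDerivAt (fun s : ℝ => (∑ i, (x + s • fun i => x i ^ k) i ^ m) / (N : ℝ))
      ((∑ i, (m : ℝ) * (x + (0 : ℝ) • fun i => x i ^ k) i ^ (m - 1) * x i ^ k) / N) 0 :=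
    (HasDerivAt.fun_sum fun i _ => (line_deriv x (fun i => x i ^ k) i).fun_pow m).div_const _
  convert h using 1
  rw [← mul_div_assoc, Finset.mul_sum]
  congr 1
  refine Finset.sum_congr rfl fun i _ => ?_
  rcases m with _ | m
  · simp
  · simp only [zero_smul, add_zero, Nat.add_sub_cancel]
    rw [show k + (m + 1) - 1 = m + k by omega, pow_add]; ring

lemma GG_deriv {N : ℕ} (k : ℕ) (κ : List ℕ) (x : Fin N → ℝ) :
    HasDerivAt (fun s : ℝ => GG N κ (x + s • fun i => x i ^ k))
      (∑ l : Fin κ.length, (κ[l] : ℝ) * GG N ((k + κ[l] - 1) :: κ.eraseIdx l) x) 0 := by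
  induction κ with
  | nil => simpa [GG] using hasDerivAt_const (0 : ℝ) (1 : ℝ)
  | cons m κ ih =>
    have h := (pw_deriv k m x).mul ih
    have e : (∑ l : Fin (m :: κ).length, ((m :: κ)[l] : ℝ) *
        GG N ((k + (m :: κ)[l] - 1) :: (m :: κ).eraseIdx l) x) =
      m * pw N (k + m - 1) x * GG N κ (x + (0 : ℝ) • fun i => x i ^ k) +
      pw N m (x + (0 : ℝ) • fun i => x i ^ k) *
        ∑ l : Fin κ.length, (κ[l] : ℝ) * GG N ((k + κ[l] - 1) :: κ.eraseIdx l) x := by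
      simp only [zero_smul, add_zero, List.length_cons]
      rw [Fin.sum_univ_succ, Finset.mul_sum]
      congr 1
      · simp [GG]; ring
      · refine Finset.sum_congr rfl fun l _ => ?_
        simp [GG]; ring
    rw [e]
    exact h

/-- The divided difference of `x ^ k`. -/
def QQ (k : ℕ) (x y : ℝ) : ℝ := ∑ a ∈ range k, x ^ a * y ^ (k - 1 - a)

lemma QQ_mul (k : ℕ) (x y : ℝ) : QQ k x y * (x - y) = x ^ k - y ^ k :=
  (Commute.all x y).geom_sum₂_mul k

lemma QQ_self (k : ℕ) (x : ℝ) : QQ k x x = k * x ^ (k - 1) := by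
  unfold QQ
  rw [Finset.sum_congr rfl (g := fun _ => x ^ (k - 1))]
  · simp
  · intro a ha
    rw [← pow_add]; congr 1; have := Finset.mem_range.1 ha; omega

lemma QQ_symm (k : ℕ) (x y : ℝ) : QQ k x y = QQ k y x := by
  unfold QQ
  rw [← Finset.sum_range_reflect]
  refine Finset.sum_congr rfl fun a ha => ?_
  have := Finset.mem_range.1 ha
  rw [show k - 1 - (k - 1 - a) = a by omega, mul_comm]

lemma vand_deriv {N : ℕ} (k : ℕ) (x : Fin N → ℝ) :
    HasDerivAt (fun s : ℝ => ∏ p ∈ Finset.univ.filter (fun p : Fin N × Fin N => p.1 < p.2),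
        ((x + s • fun i => x i ^ k) p.1 - (x + s • fun i => x i ^ k) p.2) ^ 2)
      ((∏ p ∈ Finset.univ.filter (fun p : Fin N × Fin N => p.1 < p.2), (x p.1 - x p.2) ^ 2) *
        ∑ p ∈ Finset.univ.filter (fun p : Fin N × Fin N => p.1 < p.2), 2 * QQ k (x p.1) (x p.2)) 0 := by
  have h := HasDerivAt.fun_finsetProd (u := Finset.univ.filter (fun p : Fin N × Fin N => p.1 < p.2))
    (f := fun p s => ((x + s • fun i => x i ^ k) p.1 - (x + s • fun i => x i ^ k) p.2) ^ 2)
    (fun p _ => ((line_deriv x (fun i => x i ^ k) p.1).sub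
      (line_deriv x (fun i => x i ^ k) p.2)).fun_pow 2)
  refine h.congr_deriv ?_
  simp only [zero_smul, add_zero, smul_eq_mul]
  rw [Finset.mul_sum]
  refine Finset.sum_congr rfl fun p hp => ?_
  rw [← Finset.mul_prod_erase _ _ hp, ← QQ_mul]
  simp only [Pi.sub_apply, zero_smul, add_zero]
  push_cast
  ring

lemma Vt_deriv (v : ℕ) (t : ℕ → ℝ) (x : ℝ) : HasDerivAt (Vt v t) (Vt' v t x) x := by
  unfold Vt Vt'
  have h1 : HasDerivAt (fun x : ℝ => x ^ 2 / 2) x x := by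
    have := (hasDerivAt_pow 2 x).div_const 2
    simpa using this
  have h2 : HasDerivAt (fun x : ℝ => ∑ j ∈ Finset.Icc 1 v, t j * x ^ j)
      (∑ j ∈ Finset.Icc 1 v, (j : ℝ) * t j * x ^ (j - 1)) x :=
    HasDerivAt.fun_sum fun j _ => by
      refine ((hasDerivAt_pow j x).const_mul (t j)).congr_deriv ?_
      ring
  exact h1.add h2

lemma dens_deriv {v N : ℕ} (t : ℕ → ℝ) (k : ℕ) (x : Fin N → ℝ) :
    HasDerivAt (fun s : ℝ => dens v N t (x + s • fun i => x i ^ k))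
      (dens v N t x * (∑ p ∈ Finset.univ.filter (fun p : Fin N × Fin N => p.1 < p.2),
        2 * QQ k (x p.1) (x p.2) - N * ∑ i, Vt' v t (x i) * x i ^ k)) 0 := by
  unfold dens
  have h1 : HasDerivAt (fun s : ℝ => ∑ i, Vt v t ((x + s • fun i => x i ^ k) i))
      (∑ i, Vt' v t (x i) * x i ^ k) 0 :=
    HasDerivAt.fun_sum fun i _ => by
      have h2 := Vt_deriv v t ((x + (0 : ℝ) • fun i => x i ^ k) i)
      have h3 := h2.comp (0 : ℝ) (line_deriv x (fun i => x i ^ k) i)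
      simpa [Function.comp_def] using h3
  have h4 := (vand_deriv k x).mul ((h1.const_mul (-(N : ℝ))).exp)
  refine h4.congr_deriv ?_
  simp only [zero_smul, add_zero]
  ring

lemma sum_all_eq {N : ℕ} (f : Fin N → Fin N → ℝ) (hf : ∀ p q, f p q = f q p) :
    ∑ p, ∑ q, f p q = ∑ p, f p p +
      ∑ p ∈ Finset.univ.filter (fun p : Fin N × Fin N => p.1 < p.2), 2 * f p.1 p.2 := by
  rw [Finset.sum_filter, Fintype.sum_prod_type]
  have h1 : ∀ p q, f p q = (if p = q then f p q else 0) + (if p < q then f p q else 0) +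
      (if q < p then f q p else 0) := by
    intro p q
    rcases lt_trichotomy p q with h | h | h
    · simp [h, h.ne, h.not_gt]
    · simp [h]
    · simp [h, h.ne', h.not_gt, hf p q]
  rw [Finset.sum_congr rfl fun p _ => Finset.sum_congr rfl fun q _ => h1 p q]
  simp only [Finset.sum_add_distrib, Finset.sum_ite_eq, Finset.mem_univ, if_true]
  rw [Finset.sum_comm (f := fun p q => if q < p then f q p else 0), add_assoc, ← two_mul,
    Finset.mul_sum]
  congr 1
  refine Finset.sum_congr rfl fun p _ => ?_
  rw [Finset.mul_sum]
  exact Finset.sum_congr rfl fun q _ => by split_ifs <;> simp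

lemma sum_QQ {N : ℕ} (hN : N ≠ 0) (k : ℕ) (x : Fin N → ℝ) :
    ∑ p, ∑ q, QQ k (x p) (x q) = (N : ℝ) ^ 2 * ∑ a ∈ range k, pw N a x * pw N (k - 1 - a) x := by
  have hN' : (N : ℝ) ≠ 0 := by exact_mod_cast hN
  have e : ∀ a, pw N a x * pw N (k - 1 - a) x =
      ((N : ℝ) ^ 2)⁻¹ * ∑ p, ∑ q, x p ^ a * x q ^ (k - 1 - a) := by
    intro a
    rw [← Finset.sum_mul_sum]; unfold pw; field_simp
  rw [Finset.sum_congr rfl fun a _ => e a, ← Finset.mul_sum, ← mul_assoc,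
    mul_inv_cancel₀ (pow_ne_zero _ hN'), one_mul, Finset.sum_comm]
  rw [Finset.sum_comm' (t' := Finset.univ) (s' := fun _ => range k) (by simp)]
  rw [Finset.sum_comm]
  refine Finset.sum_congr rfl fun p _ => ?_
  rw [Finset.sum_comm]
  rfl

lemma sum_Vt' {v N : ℕ} (hN : N ≠ 0) (t : ℕ → ℝ) (k : ℕ) (x : Fin N → ℝ) :
    ∑ i, Vt' v t (x i) * x i ^ k = N * (pw N (k + 1) x +
      ∑ j ∈ Finset.Icc 1 v, (j : ℝ) * t j * pw N (k + j - 1) x) := by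
  have hN' : (N : ℝ) ≠ 0 := by exact_mod_cast hN
  have e : ∀ m, ∑ i, x i ^ m = N * pw N m x := fun m => by unfold pw; field_simp
  unfold Vt'
  simp only [add_mul, Finset.sum_add_distrib, mul_add, Finset.sum_mul]
  congr 1
  · rw [← e]; exact Finset.sum_congr rfl fun i _ => by ring
  · rw [Finset.sum_comm, Finset.mul_sum]
    refine Finset.sum_congr rfl fun j hj => ?_
    have hj1 := (Finset.mem_Icc.1 hj).1
    rw [mul_left_comm, ← e, Finset.mul_sum]
    refine Finset.sum_congr rfl fun i _ => ?_
    rw [mul_assoc, ← pow_add]; congr 2; omega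

/-- The integrand appearing in the loop equation. -/
def lint (v N : ℕ) (t : ℕ → ℝ) (k : ℕ) (κ : List ℕ) (x : Fin N → ℝ) : ℝ :=
  (N : ℝ) ^ 2 * (∑ a ∈ range k, GG N (a :: (k - 1 - a) :: κ) x - GG N ((k + 1) :: κ) x -
    ∑ j ∈ Finset.Icc 1 v, (j : ℝ) * t j * GG N ((k + j - 1) :: κ) x) +
  ∑ l : Fin κ.length, (κ[l] : ℝ) * GG N ((k + κ[l] - 1) :: κ.eraseIdx l) x

lemma div_eq {v N : ℕ} (hN : N ≠ 0) (t : ℕ → ℝ) (k : ℕ) (κ : List ℕ) (x : Fin N → ℝ) :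
    ∑ i, fderiv ℝ (fun x : Fin N → ℝ => x i ^ k * (GG N κ x * dens v N t x)) x (Pi.single i 1) =
      lint v N t k κ x * dens v N t x := by
  set g : (Fin N → ℝ) → ℝ := fun x => GG N κ x * dens v N t x with hg
  have hgd : DifferentiableAt ℝ g x :=
    ((GG_contDiff N κ).mul (dens_contDiff v N t)).differentiable (by norm_num) x
  have h1 : ∀ i, fderiv ℝ (fun x : Fin N → ℝ => x i ^ k * g x) x (Pi.single i 1) =
      x i ^ k * fderiv ℝ g x (Pi.single i 1) + (k * x i ^ (k - 1)) * g x := by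
    intro i
    have h2 : HasFDerivAt (fun x : Fin N → ℝ => x i ^ k)
        ((k * x i ^ (k - 1)) • ContinuousLinearMap.proj (R := ℝ) (φ := fun _ : Fin N => ℝ) i) x := by
      have := (hasDerivAt_pow k (x i)).comp_hasFDerivAt x
        (ContinuousLinearMap.proj (R := ℝ) (φ := fun _ : Fin N => ℝ) i).hasFDerivAt
      exact this
    rw [(h2.fun_mul hgd.hasFDerivAt).fderiv]
    simp [mul_comm]
  rw [Finset.sum_congr rfl fun i _ => h1 i, Finset.sum_add_distrib]
  have h3 : ∑ i, x i ^ k * fderiv ℝ g x (Pi.single i 1) = fderiv ℝ g x (fun i => x i ^ k) := by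
    conv_rhs => rw [pi_eq_sum_univ (fun i => x i ^ k), map_sum]
    refine Finset.sum_congr rfl fun i _ => ?_
    rw [map_smul, smul_eq_mul]
    congr 2
    funext j; simp [Pi.single_apply, eq_comm]
  have h4 : HasDerivAt (fun s : ℝ => g (x + s • fun i => x i ^ k)) (fderiv ℝ g x fun i => x i ^ k) 0 := by
    have h5 : HasDerivAt (fun s : ℝ => x + s • fun i => x i ^ k) (fun i => x i ^ k) 0 := by
      have := ((hasDerivAt_id (0 : ℝ)).smul_const (fun i => x i ^ k)).const_add x
      simpa using this
    have h6 : HasFDerivAt g (fderiv ℝ g x) (x + (0 : ℝ) • fun i => x i ^ k) := by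
      simpa using hgd.hasFDerivAt
    exact h6.comp_hasDerivAt (0 : ℝ) h5
  have h7 := h4.unique ((GG_deriv k κ x).mul (dens_deriv t k x))
  rw [h3, h7]
  have h8 := sum_all_eq (fun p q => QQ k (x p) (x q)) (fun p q => QQ_symm k _ _)
  rw [sum_QQ hN] at h8
  simp only [QQ_self] at h8
  simp only [zero_smul, add_zero]
  rw [sum_Vt' hN, ← Finset.sum_mul, hg]
  unfold lint
  simp only [GG]
  have e1 : ∑ a ∈ range k, pw N a x * (pw N (k - 1 - a) x * GG N κ x) =
      (∑ a ∈ range k, pw N a x * pw N (k - 1 - a) x) * GG N κ x := by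
    rw [Finset.sum_mul]; exact Finset.sum_congr rfl fun a _ => by ring
  have e2 : ∑ j ∈ Finset.Icc 1 v, (j : ℝ) * t j * (pw N (k + j - 1) x * GG N κ x) =
      (∑ j ∈ Finset.Icc 1 v, (j : ℝ) * t j * pw N (k + j - 1) x) * GG N κ x := by
    rw [Finset.sum_mul]; exact Finset.sum_congr rfl fun a _ => by ring
  rw [e1, e2]
  linear_combination (-GG N κ x * dens v N t x) * h8


/-- Expectations on the box. -/
def XR (v N : ℕ) (t : ℕ → ℝ) (κ : List ℕ) : ℝ := (∫ x in Bx N, GG N κ x * dens v N t x) / Zb v N t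

lemma GGd_int (v N : ℕ) (t : ℕ → ℝ) (κ : List ℕ) :
    IntegrableOn (fun x => GG N κ x * dens v N t x) (Bx N) :=
  (((GG_contDiff N κ).continuous.mul (dens_continuous v N t)).continuousOn).integrableOn_compact
    (Bx_compact N)

lemma XR_nil (v N : ℕ) (t : ℕ → ℝ) : XR v N t [] = 1 := by
  unfold XR
  simp only [GG, one_mul]
  exact div_self (Zb_pos v N t).ne'

lemma XR_zero {v N : ℕ} (hN : N ≠ 0) (t : ℕ → ℝ) (κ : List ℕ) : XR v N t (0 :: κ) = XR v N t κ := by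
  have hN' : (N : ℝ) ≠ 0 := by exact_mod_cast hN
  unfold XR
  simp [GG, pw, hN']

lemma XR_bound (v N : ℕ) (t : ℕ → ℝ) (κ : List ℕ) : |XR v N t κ| ≤ 16 ^ κ.sum := by
  unfold XR
  have hz := Zb_pos v N t
  rw [abs_div, abs_of_pos hz, div_le_iff₀ hz, Zb, ← integral_const_mul]
  refine (abs_integral_le_integral_abs).trans ?_
  refine setIntegral_mono_on (GGd_int v N t κ).abs ((dens_intOn v N t).const_mul _) (Bx_meas N)
    fun x hx => ?_
  rw [abs_mul, abs_of_nonneg (dens_nonneg v N t x)]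
  exact mul_le_mul_of_nonneg_right (GG_bound κ hx) (dens_nonneg _ _ _ _)

lemma face_term {v n : ℕ} {t : ℕ → ℝ} (h : Adm v t) (k : ℕ) (κ : List ℕ) (i : Fin (n + 1)) {c : ℝ}
    (hc : |c| = 16) :
    |∫ y in Bx n, (i.insertNth c y : Fin (n + 1) → ℝ) i ^ k *
      (GG (n + 1) κ (i.insertNth c y) * dens v (n + 1) t (i.insertNth c y))| ≤
      16 ^ (k + κ.sum) * (Real.exp (-64 * ((n + 1 : ℕ) : ℝ)) * Zb v (n + 1) t) := by
  have hci : Continuous fun y : Fin n → ℝ => (i.insertNth c y : Fin (n + 1) → ℝ) :=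
    Continuous.finInsertNth i continuous_const continuous_id
  have hcd : Continuous fun y : Fin n → ℝ => dens v (n + 1) t (i.insertNth c y) :=
    (dens_continuous v (n + 1) t).comp hci
  have hcg : Continuous fun y : Fin n → ℝ => GG (n + 1) κ (i.insertNth c y) :=
    (GG_contDiff (n + 1) κ).continuous.comp hci
  refine le_trans ?_ (mul_le_mul_of_nonneg_left (face_bound h i hc) (by positivity))
  rw [← integral_const_mul]
  refine (abs_integral_le_integral_abs).trans ?_
  simp only [Fin.insertNth_apply_same]
  refine setIntegral_mono_on ?_ ?_ (Bx_meas n) fun y hy => ?_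
  · exact (((continuous_const.mul (hcg.mul hcd)).abs).continuousOn).integrableOn_compact (Bx_compact n)
  · exact ((continuous_const.mul hcd).continuousOn).integrableOn_compact (Bx_compact n)
  have hin : (i.insertNth c y : Fin (n + 1) → ℝ) ∈ Bx (n + 1) := by
    rw [mem_Bx, Fin.forall_iff_succAbove i]
    simp only [Fin.insertNth_apply_same, Fin.insertNth_apply_succAbove]
    exact ⟨hc.le, mem_Bx.1 hy⟩
  rw [abs_mul, abs_mul, abs_pow, hc, abs_of_nonneg (dens_nonneg v (n + 1) t _), pow_add, mul_assoc]
  have := GG_bound κ hin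
  have := dens_nonneg v (n + 1) t (i.insertNth c y)
  gcongr

lemma lint_bound {v n : ℕ} {t : ℕ → ℝ} (h : Adm v t) (k : ℕ) (κ : List ℕ) :
    |∫ x in Bx (n + 1), lint v (n + 1) t k κ x * dens v (n + 1) t x| ≤
      2 * ((n + 1 : ℕ) : ℝ) * (16 ^ (k + κ.sum) * (Real.exp (-64 * ((n + 1 : ℕ) : ℝ)) * Zb v (n + 1) t)) := by
  have hcd : ∀ i : Fin (n + 1), ContDiff ℝ 1
      (fun x : Fin (n + 1) → ℝ => x i ^ k * (GG (n + 1) κ x * dens v (n + 1) t x)) := fun i => by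
    have h1 := GG_contDiff (n + 1) κ
    have h2 := dens_contDiff v (n + 1) t
    fun_prop
  have hcl : Continuous fun x : Fin (n + 1) → ℝ => lint v (n + 1) t k κ x * dens v (n + 1) t x := by
    have h1 := fun κ => (GG_contDiff (n + 1) κ).continuous
    have h2 := dens_continuous v (n + 1) t
    unfold lint
    fun_prop
  have key := integral_divergence_of_hasFDerivAt_off_countable' (fun _ : Fin (n + 1) => (-16 : ℝ))
    (fun _ => 16) (fun _ => by norm_num)
    (fun i (x : Fin (n + 1) → ℝ) => x i ^ k * (GG (n + 1) κ x * dens v (n + 1) t x))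
    (fun i x => fderiv ℝ (fun x : Fin (n + 1) → ℝ => x i ^ k * (GG (n + 1) κ x * dens v (n + 1) t x)) x)
    ∅ Set.countable_empty (fun i => (hcd i).continuous.continuousOn)
    (fun x _ i => ((hcd i).differentiable (by norm_num) x).hasFDerivAt)
    (by
      simp only [div_eq (Nat.succ_ne_zero n)]
      exact hcl.continuousOn.integrableOn_compact isCompact_Icc)
  simp only [div_eq (Nat.succ_ne_zero n)] at key
  change ∫ x in Bx (n + 1), _ = ∑ i : Fin (n + 1), ((∫ y in Bx n, _) - ∫ y in Bx n, _) at key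
  rw [key]
  refine (Finset.abs_sum_le_sum_abs _ _).trans ?_
  calc _ ≤ ∑ i : Fin (n + 1), 2 * (16 ^ (k + κ.sum) *
        (Real.exp (-64 * ((n + 1 : ℕ) : ℝ)) * Zb v (n + 1) t)) := by
        refine Finset.sum_le_sum fun i _ => (abs_sub _ _).trans ?_
        rw [two_mul]
        exact add_le_add (face_term h k κ i (by norm_num)) (face_term h k κ i (by norm_num))
    _ = _ := by simp; ring

lemma XR_loop {v n : ℕ} {t : ℕ → ℝ} (h : Adm v t) (k : ℕ) (κ : List ℕ) :
    |XR v (n + 1) t ((k + 1) :: κ) - (∑ a ∈ range k, XR v (n + 1) t (a :: (k - 1 - a) :: κ) -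
      ∑ j ∈ Finset.Icc 1 v, (j : ℝ) * t j * XR v (n + 1) t ((k + j - 1) :: κ) +
      (((n + 1 : ℕ) : ℝ) ^ 2)⁻¹ * ∑ l : Fin κ.length, (κ[l] : ℝ) *
        XR v (n + 1) t ((k + κ[l] - 1) :: κ.eraseIdx l))| ≤
      2 * Real.exp (-64 * ((n + 1 : ℕ) : ℝ)) * 16 ^ (k + κ.sum) := by
  set N : ℝ := ((n + 1 : ℕ) : ℝ) with hN
  have hN1 : 1 ≤ N := by rw [hN]; push_cast; linarith [Nat.cast_nonneg (α := ℝ) n]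
  have hz := Zb_pos v (n + 1) t
  have hi := GGd_int v (n + 1) t
  have e : ∫ x in Bx (n + 1), lint v (n + 1) t k κ x * dens v (n + 1) t x =
      Zb v (n + 1) t * N ^ 2 * (-(XR v (n + 1) t ((k + 1) :: κ) -
      (∑ a ∈ range k, XR v (n + 1) t (a :: (k - 1 - a) :: κ) -
      ∑ j ∈ Finset.Icc 1 v, (j : ℝ) * t j * XR v (n + 1) t ((k + j - 1) :: κ) +
      (N ^ 2)⁻¹ * ∑ l : Fin κ.length, (κ[l] : ℝ) *
        XR v (n + 1) t ((k + κ[l] - 1) :: κ.eraseIdx l)))) := by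
    have e1 : ∀ κ, ∫ x in Bx (n + 1), GG (n + 1) κ x * dens v (n + 1) t x =
        Zb v (n + 1) t * XR v (n + 1) t κ := fun κ => by
      unfold XR; field_simp
    have e2 : ∀ x, lint v (n + 1) t k κ x * dens v (n + 1) t x =
      N ^ 2 * (∑ a ∈ range k, GG (n + 1) (a :: (k - 1 - a) :: κ) x * dens v (n + 1) t x -
        GG (n + 1) ((k + 1) :: κ) x * dens v (n + 1) t x -
        ∑ j ∈ Finset.Icc 1 v, (j : ℝ) * t j * (GG (n + 1) ((k + j - 1) :: κ) x * dens v (n + 1) t x)) +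
      ∑ l : Fin κ.length, (κ[l] : ℝ) * (GG (n + 1) ((k + κ[l] - 1) :: κ.eraseIdx l) x * dens v (n + 1) t x) := by
      intro x
      unfold lint
      simp only [← mul_assoc, ← Finset.sum_mul]
      rw [← hN]; ring
    simp only [e2]
    have i1 : IntegrableOn (fun x => ∑ a ∈ range k, GG (n + 1) (a :: (k - 1 - a) :: κ) x * dens v (n + 1) t x) (Bx (n + 1)) :=
      integrable_finsetSum _ fun a _ => hi _
    have i2 : IntegrableOn (fun x => ∑ j ∈ Finset.Icc 1 v, (j : ℝ) * t j * (GG (n + 1) ((k + j - 1) :: κ) x * dens v (n + 1) t x)) (Bx (n + 1)) :=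
      integrable_finsetSum _ fun a _ => (hi _).const_mul _
    have i3 : IntegrableOn (fun x => ∑ l : Fin κ.length, (κ[l] : ℝ) * (GG (n + 1) ((k + κ[l] - 1) :: κ.eraseIdx l) x * dens v (n + 1) t x)) (Bx (n + 1)) :=
      integrable_finsetSum _ fun a _ => (hi _).const_mul _
    have i4 : IntegrableOn (fun x => ∑ a ∈ range k, GG (n + 1) (a :: (k - 1 - a) :: κ) x * dens v (n + 1) t x -
        GG (n + 1) ((k + 1) :: κ) x * dens v (n + 1) t x) (Bx (n + 1)) := i1.sub (hi _)
    have i5 : IntegrableOn (fun x => N ^ 2 * (∑ a ∈ range k, GG (n + 1) (a :: (k - 1 - a) :: κ) x * dens v (n + 1) t x -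
        GG (n + 1) ((k + 1) :: κ) x * dens v (n + 1) t x -
        ∑ j ∈ Finset.Icc 1 v, (j : ℝ) * t j * (GG (n + 1) ((k + j - 1) :: κ) x * dens v (n + 1) t x)))
        (Bx (n + 1)) := (i4.sub i2).const_mul _
    rw [integral_add i5 i3, integral_const_mul,
      integral_sub i4 i2, integral_sub i1 (hi _), integral_finsetSum _ fun a _ => hi _,
      integral_finsetSum _ fun a _ => (hi _).const_mul _,
      integral_finsetSum _ fun a _ => (hi _).const_mul _]
    simp only [integral_const_mul, e1]
    have f1 : ∀ (ι : Type) (s : Finset ι) (c f : ι → ℝ), ∑ x ∈ s, c x * (Zb v (n + 1) t * f x) =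
        Zb v (n + 1) t * ∑ x ∈ s, c x * f x := fun ι s c f => by
      rw [Finset.mul_sum]; exact Finset.sum_congr rfl fun x _ => by ring
    rw [f1, f1, ← Finset.mul_sum]
    field_simp
    ring
  have hb := lint_bound (n := n) h k κ
  rw [e, abs_mul, abs_neg, abs_of_pos (by positivity), ← hN] at hb
  set A := |XR v (n + 1) t ((k + 1) :: κ) - _| with hA
  have hp : 0 ≤ 16 ^ (k + κ.sum) * (Real.exp (-64 * N)) := by positivity
  have hA0 : 0 ≤ A := abs_nonneg _
  have h3 : Zb v (n + 1) t * (N ^ 2 * A) ≤ Zb v (n + 1) t * (N * (2 * (16 ^ (k + κ.sum) * (Real.exp (-64 * N))))) := by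
    calc _ = Zb v (n + 1) t * N ^ 2 * A := by ring
      _ ≤ _ := hb
      _ = _ := by ring
  have h4 := le_of_mul_le_mul_left h3 hz
  have h5 : N * (N * A) ≤ N * (2 * (16 ^ (k + κ.sum) * (Real.exp (-64 * N)))) := by
    calc _ = N ^ 2 * A := by ring
      _ ≤ _ := h4
  have h6 := le_of_mul_le_mul_left h5 (by linarith)
  nlinarith

lemma sum_pad {v : ℕ} (s : Fin v → ℝ) (F : ℕ → ℝ → ℝ) :
    ∑ j ∈ Finset.Icc 1 v, F j (pad v s j) = ∑ j : Fin v, F (j + 1) (s j) := by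
  have h1 : Finset.Icc 1 v = Finset.Ico (0 + 1) (v + 1) := by ext; simp
  rw [h1, ← Finset.sum_Ico_add' (fun j => F j (pad v s j)) 0 v 1, ← Finset.range_eq_Ico,
    ← Fin.sum_univ_eq_sum_range (fun j => F (j + 1) (pad v s (j + 1)))]
  refine Finset.sum_congr rfl fun j _ => ?_
  simp [pad]

/-- Complexified expectations. -/
def XN (v N : ℕ) (s : Fin v → ℝ) : List ℕ → ℂ := fun κ => ((XR v N (pad v s) κ : ℝ) : ℂ)

lemma XN_bd {r0 : ℝ} (hr : 64 ≤ r0) (v N : ℕ) (s : Fin v → ℝ) : Bd r0 1 (XN v N s) := fun κ => by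
  unfold XN
  rw [one_mul, Complex.norm_real, Real.norm_eq_abs]
  exact (XR_bound v N _ κ).trans (pow_sum_le_lw (by norm_num) (by linarith) κ)

lemma loop_eq {r0 : ℝ} (hr : 64 ≤ r0) {v N : ℕ} (hN : 1 ≤ N) {s : Fin v → ℝ} (h : Adm v (pad v s)) :
    ∃ err : List ℕ → ℂ, Bd r0 (2 * Real.exp (-64 * (N : ℝ))) err ∧
      XN v N s = src + Kt v (fun i => (s i : ℂ)) (XN v N s) + ((N : ℂ) ^ 2)⁻¹ • Bop (XN v N s) + err := by
  obtain ⟨n, rfl⟩ : ∃ n, N = n + 1 := ⟨N - 1, by omega⟩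
  refine ⟨XN v (n + 1) s - (src + Kt v (fun i => (s i : ℂ)) (XN v (n + 1) s) +
    (((n + 1 : ℕ) : ℂ) ^ 2)⁻¹ • Bop (XN v (n + 1) s)), ?_, by abel⟩
  intro κ
  have hlw := lw_pos (by linarith : 0 < r0) κ
  match κ with
  | [] =>
    have : ‖(XN v (n + 1) s - (src + Kt v (fun i => (s i : ℂ)) (XN v (n + 1) s) +
      (((n + 1 : ℕ) : ℂ) ^ 2)⁻¹ • Bop (XN v (n + 1) s))) []‖ = 0 := by
      simp [XN, XR_nil, src, Kt, K0, K1, Bop]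
    rw [this]; positivity
  | 0 :: κ =>
    have : ‖(XN v (n + 1) s - (src + Kt v (fun i => (s i : ℂ)) (XN v (n + 1) s) +
      (((n + 1 : ℕ) : ℂ) ^ 2)⁻¹ • Bop (XN v (n + 1) s))) (0 :: κ)‖ = 0 := by
      simp [XN, XR_zero, src, Kt, K0, K1, Bop]
    rw [this]; positivity
  | (k + 1) :: κ =>
    have h1 := XR_loop (n := n) h k κ
    rw [sum_pad s (fun j a => (j : ℝ) * a * XR v (n + 1) (pad v s) ((k + j - 1) :: κ))] at h1
    have h2 : (XN v (n + 1) s - (src + Kt v (fun i => (s i : ℂ)) (XN v (n + 1) s) +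
      (((n + 1 : ℕ) : ℂ) ^ 2)⁻¹ • Bop (XN v (n + 1) s))) ((k + 1) :: κ) =
      ((XR v (n + 1) (pad v s) ((k + 1) :: κ) - (∑ a ∈ range k, XR v (n + 1) (pad v s) (a :: (k - 1 - a) :: κ) -
      ∑ j : Fin v, ((j + 1 : ℕ) : ℝ) * s j * XR v (n + 1) (pad v s) ((k + (j + 1) - 1) :: κ) +
      (((n + 1 : ℕ) : ℝ) ^ 2)⁻¹ * ∑ l : Fin κ.length, (κ[l] : ℝ) *
        XR v (n + 1) (pad v s) ((k + κ[l] - 1) :: κ.eraseIdx l)) : ℝ) : ℂ) := by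
      have e3 : ∀ j : ℕ, k + (j + 1) - 1 = k + j := fun j => by omega
      simp only [XN, src, Kt, K0, K1, Bop, Pi.sub_apply, Pi.add_apply, Finset.sum_apply,
        Pi.smul_apply, LinearMap.coe_mk, AddHom.coe_mk, smul_eq_mul, e3]
      push_cast
      simp only [mul_neg, Finset.sum_neg_distrib]
      have e4 : ∑ x : Fin v, (s x : ℂ) * (((x : ℕ) + 1 : ℂ) * (XR v (n + 1) (pad v s) ((k + x) :: κ) : ℂ)) =
        ∑ x : Fin v, ((x : ℕ) + 1 : ℂ) * (s x : ℂ) * (XR v (n + 1) (pad v s) ((k + x) :: κ) : ℂ) :=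
        Finset.sum_congr rfl fun x _ => by ring
      rw [e4]; ring
    rw [h2, Complex.norm_real, Real.norm_eq_abs]
    refine h1.trans (mul_le_mul_of_nonneg_left ?_ (by positivity))
    refine le_trans (pow_le_pow_right₀ (by norm_num) ?_) (pow_sum_le_lw (R := 16) (by norm_num) (by linarith) _)
    simp


/-- `Kt` as a linear map. -/
def KtL (v : ℕ) (t : Fin v → ℂ) : (List ℕ → ℂ) →ₗ[ℂ] (List ℕ → ℂ) := K0 + ∑ j : Fin v, t j • K1 j

lemma Kt_eq (v : ℕ) (t : Fin v → ℂ) (X : List ℕ → ℂ) : Kt v t X = KtL v t X := by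
  simp [Kt, KtL, LinearMap.sum_apply]

lemma exp_le_eps (H : ℕ) {N : ℕ} (hN : 1 ≤ N) {c : ℝ} (hc : 1 ≤ c) :
    Real.exp (-c * (N : ℝ)) ≤ (2 * H).factorial * (((N : ℝ) ^ 2)⁻¹) ^ H := by
  have hN' : (1 : ℝ) ≤ N := by exact_mod_cast hN
  have h1 := Real.pow_div_factorial_le_exp (N : ℝ) (by positivity) (2 * H)
  have h2 : Real.exp (-c * (N : ℝ)) ≤ Real.exp (-(N : ℝ)) := Real.exp_le_exp.2 (by nlinarith)
  refine h2.trans ?_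
  rw [Real.exp_neg, inv_pow, ← pow_mul, ← div_eq_mul_inv, inv_eq_one_div,
    div_le_div_iff₀ (Real.exp_pos _) (by positivity), one_mul]
  rw [div_le_iff₀ (by positivity)] at h1
  linarith

lemma Bd.sub {r M M' : ℝ} {X Y : List ℕ → ℂ} (h : Bd r M X) (hY : Bd r M' Y) :
    Bd r (M + M') (X - Y) := fun κ => by
  rw [add_mul]; exact (norm_sub_le _ _).trans (add_le_add (h κ) (hY κ))

/-- The hypotheses satisfied by the coefficient functions. -/
structure IsS (v : ℕ) (d : ℝ) (S : ℕ → (Fin v → ℂ) → List ℕ → ℂ) : Prop where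
  hd0 : 0 ≤ d
  hd : d * (4 * v * (2 * 64 : ℝ) ^ v) ≤ 1 / 4
  bd : ∀ g t, ∃ M, Bd (rg 64 g) M (S g t)
  zero : ∀ t, ∑ j, ‖t j‖ < d → S 0 t = src + Kt v t (S 0 t)
  succ : ∀ g t, ∑ j, ‖t j‖ < d → S (g + 1) t = Bop (S g t) + Kt v t (S (g + 1) t)
  an : ∀ g t κ, ∑ j, ‖t j‖ < d → AnalyticAt ℂ (fun t => S g t κ) t

lemma IsS.small {v : ℕ} {d : ℝ} {S : ℕ → (Fin v → ℂ) → List ℕ → ℂ} (hS : IsS v d S) (g : ℕ)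
    {t : Fin v → ℂ} (ht : ∑ j, ‖t j‖ < d) : (∑ j, ‖t j‖) * (4 * v * (rg 64 g) ^ v) ≤ 1 / 4 := by
  refine le_trans ?_ (dom_le (by norm_num) hS.hd0 hS.hd g)
  have := rg_ge (r0 := 64) (by norm_num) g
  have h2 : 0 ≤ rg 64 g := by linarith
  gcongr

lemma rg_mono {g g' : ℕ} (h : g ≤ g') : rg 64 g ≤ rg 64 g' :=
  monotone_nat_of_le_succ (fun n => (rg_lt (by norm_num) n).le) h

lemma rg_pos (g : ℕ) : 0 < rg 64 g := lt_of_lt_of_le (by norm_num) (rg_ge (r0 := 64) (by norm_num) g)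

theorem expansion {v : ℕ} {d : ℝ} {S : ℕ → (Fin v → ℂ) → List ℕ → ℂ} (hS : IsS v d S) (H : ℕ) :
    ∃ C : ℝ, ∀ s : Fin v → ℝ, Adm v (pad v s) → ∑ j, ‖(s j : ℂ)‖ < d → ∀ N : ℕ, 1 ≤ N →
      Bd (rg 64 H) (C * (((N : ℝ) ^ 2)⁻¹) ^ H)
        (XN v N s - ∑ g ∈ range H, (((N : ℂ) ^ 2)⁻¹) ^ g • S g (fun i => (s i : ℂ))) := by
  induction H with
  | zero =>
    refine ⟨1, fun s _ _ N _ => ?_⟩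
    have : rg 64 0 = 64 := by norm_num [rg]
    simpa [this] using XN_bd (r0 := 64) le_rfl v N s
  | succ H ih =>
    obtain ⟨C, hC⟩ := ih
    obtain ⟨Cb, hCb0, hCb⟩ := Bop_bd (r := rg 64 H) (r' := rg 64 (H + 1))
      (le_trans (by norm_num) (rg_ge (r0 := 64) (by norm_num) H)) (rg_lt (by norm_num) H)
    refine ⟨4 * (Cb * C + 2 * (2 * (H + 1)).factorial), fun s hs hd N hN => ?_⟩
    set t : Fin v → ℂ := fun i => (s i : ℂ) with ht
    set ε : ℝ := ((N : ℝ) ^ 2)⁻¹ with hε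
    have hε0 : 0 ≤ ε := by positivity
    have hεc : ((N : ℂ) ^ 2)⁻¹ = (ε : ℂ) := by rw [hε]; push_cast; rfl
    obtain ⟨err, herr, hX⟩ := loop_eq (r0 := 64) le_rfl hN hs
    have hCs := hC s hs hd N hN
    rw [hεc] at hCs hX ⊢
    set D := XN v N s - ∑ g ∈ range H, (ε : ℂ) ^ g • S g t with hD
    set D' := XN v N s - ∑ g ∈ range (H + 1), (ε : ℂ) ^ g • S g t with hD'
    have hsum : ∑ g ∈ range (H + 1), (ε : ℂ) ^ g • S g t =
        src + (ε : ℂ) • Bop (∑ g ∈ range H, (ε : ℂ) ^ g • S g t) +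
          KtL v t (∑ g ∈ range (H + 1), (ε : ℂ) ^ g • S g t) := by
      simp only [map_sum, map_smul, ← Kt_eq]
      rw [Finset.sum_range_succ', Finset.sum_range_succ', Finset.smul_sum]
      have e1 : ∀ g, (ε : ℂ) ^ (g + 1) • S (g + 1) t = (ε : ℂ) • (ε : ℂ) ^ g • Bop (S g t) +
          (ε : ℂ) ^ (g + 1) • Kt v t (S (g + 1) t) := fun g => by
        conv_lhs => rw [hS.succ g t hd]
        rw [smul_add, smul_smul, pow_succ']
      rw [Finset.sum_congr rfl fun g _ => e1 g, Finset.sum_add_distrib]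
      conv_lhs => rw [hS.zero t hd]
      simp only [pow_zero, one_smul]
      abel
    have heq : D' = ((ε : ℂ) • Bop D + err) + Kt v t D' := by
      rw [Kt_eq, hD', hD, map_sub, map_sub, smul_sub]
      rw [Kt_eq] at hX
      conv_lhs => rw [hX, hsum]
      abel
    have hM : ∃ M, Bd (rg 64 (H + 1)) M D' := by
      choose M hM using fun g => hS.bd g t
      refine ⟨_, Bd.sub ((XN_bd (r0 := 64) le_rfl v N s).mono (by norm_num)
        (rg_ge (by norm_num) _) le_rfl)
        (Bd.sum (range (H + 1)) fun g hg => Bd.smul ((ε : ℂ) ^ g) ((hM g).mono (rg_pos g)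
          (rg_mono (by have := Finset.mem_range.1 hg; omega)) le_rfl))⟩
    obtain ⟨M, hM⟩ := hM
    have hF : Bd (rg 64 (H + 1)) (Cb * C * ε ^ (H + 1) + 2 * (2 * (H + 1)).factorial * ε ^ (H + 1))
        ((ε : ℂ) • Bop D + err) := by
      refine Bd.add ?_ ?_
      · refine ((hCb _ _ hCs).smul (ε : ℂ)).mono (rg_pos _) le_rfl (le_of_eq ?_)
        rw [Complex.norm_real, Real.norm_of_nonneg hε0, pow_succ]; ring
      · refine herr.mono (by norm_num) (rg_ge (by norm_num) _) ?_
        have := exp_le_eps (H + 1) hN (c := 64) (by norm_num)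
        rw [mul_assoc]; gcongr
    have h16 : (16 : ℝ) ≤ rg 64 (H + 1) := le_trans (by norm_num) (rg_ge (r0 := 64) (by norm_num) (H + 1))
    refine (stability h16 (hS.small (H + 1) hd) hM hF heq).mono (rg_pos _) le_rfl (le_of_eq ?_)
    ring

/-- Pointwise conjugation. -/
def cj (X : List ℕ → ℂ) : List ℕ → ℂ := fun κ => (starRingEnd ℂ) (X κ)

lemma cj_Kt {v : ℕ} (s : Fin v → ℝ) (X : List ℕ → ℂ) :
    cj (Kt v (fun i => (s i : ℂ)) X) = Kt v (fun i => (s i : ℂ)) (cj X) := by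
  funext κ
  match κ with
  | [] => simp [cj, Kt, K0, K1]
  | 0 :: κ => simp [cj, Kt, K0, K1]
  | (k + 1) :: κ => simp [cj, Kt, K0, K1]

lemma cj_Bop (X : List ℕ → ℂ) : cj (Bop X) = Bop (cj X) := by
  funext κ
  match κ with
  | [] => simp [cj, Bop]
  | 0 :: κ => simp [cj, Bop]
  | (k + 1) :: κ => simp [cj, Bop]

lemma cj_src : cj src = src := by
  funext κ
  by_cases h : κ = [] <;> simp [cj, src, h]

lemma cj_add (X Y : List ℕ → ℂ) : cj (X + Y) = cj X + cj Y := by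
  funext κ; simp [cj]

lemma Bd.cj {r M : ℝ} {X : List ℕ → ℂ} (h : Bd r M X) : Bd r M (cj X) := fun κ => by
  simpa [LoopEq.cj] using h κ

lemma S_real {v : ℕ} {d : ℝ} {S : ℕ → (Fin v → ℂ) → List ℕ → ℂ} (hS : IsS v d S)
    {s : Fin v → ℝ} (hs : ∑ j, ‖(s j : ℂ)‖ < d) (g : ℕ) :
    cj (S g (fun i => (s i : ℂ))) = S g (fun i => (s i : ℂ)) := by
  set t : Fin v → ℂ := fun i => (s i : ℂ) with ht
  have key : ∀ g (F : List ℕ → ℂ), cj F = F → S g t = F + Kt v t (S g t) → cj (S g t) = S g t := by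
    intro g F hF hE
    obtain ⟨M, hM⟩ := hS.bd g t
    have h1 : cj (S g t) = F + Kt v t (cj (S g t)) := by
      conv_lhs => rw [hE, cj_add, hF, cj_Kt]
    have h2 : cj (S g t) - S g t = 0 + Kt v t (cj (S g t) - S g t) := by
      rw [Kt_eq, map_sub, ← Kt_eq, ← Kt_eq, zero_add]
      calc cj (S g t) - S g t = (F + Kt v t (cj (S g t))) - (F + Kt v t (S g t)) := by
            rw [← h1, ← hE]
        _ = Kt v t (cj (S g t)) - Kt v t (S g t) := by abel
    have h0 : Bd (rg 64 g) 0 (0 : List ℕ → ℂ) := fun κ => by simp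
    have h16 : (16 : ℝ) ≤ rg 64 g := le_trans (by norm_num) (rg_ge (r0 := 64) (by norm_num) g)
    have h3 := stability h16 (hS.small g hs) (hM.cj.sub hM) h0 h2
    funext κ
    have := h3 κ
    simp only [mul_zero, zero_mul, norm_le_zero_iff] at this
    exact sub_eq_zero.1 this
  induction g with
  | zero => exact key 0 src cj_src (hS.zero t hs)
  | succ g ih => exact key (g + 1) _ (by rw [cj_Bop, ih]) (hS.succ g t hs)

lemma analyticAt_integral {v : ℕ} {f : (Fin v → ℂ) → ℂ} (hf : AnalyticAt ℂ f 0) :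
    AnalyticAt ℂ (fun t => ∫ τ in (0 : ℝ)..1, f ((τ : ℂ) • t)) 0 := by
  obtain ⟨p, r, hp⟩ := hf
  refine ⟨fun n => ((n : ℂ) + 1)⁻¹ • p n, r, ?_, hp.r_pos, ?_⟩
  · refine hp.r_le.trans (FormalMultilinearSeries.radius_le_of_le fun n => ?_)
    rw [norm_smul]
    refine mul_le_of_le_one_left (norm_nonneg _) ?_
    rw [norm_inv]
    refine inv_le_one_of_one_le₀ ?_
    have : ((n : ℂ) + 1) = ((n + 1 : ℕ) : ℂ) := by push_cast; ring
    rw [this, Complex.norm_natCast]; push_cast; linarith [Nat.cast_nonneg (α := ℝ) n]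
  · intro y hy
    rw [zero_add]
    have hpow : ∀ (n : ℕ) (τ : ℝ), p n (fun _ => (τ : ℂ) • y) = (τ : ℂ) ^ n * p n (fun _ => y) := by
      intro n τ
      rw [(p n).map_smul_univ (fun _ => (τ : ℂ)) (fun _ => y)]
      simp
    have h := intervalIntegral.hasSum_integral_of_dominated_convergence (μ := volume) (a := 0) (b := 1)
      (F := fun n (τ : ℝ) => p n (fun _ => (τ : ℂ) • y)) (f := fun τ : ℝ => f ((τ : ℂ) • y))
      (fun n _ => ‖p n (fun _ => y)‖) ?_ ?_ ?_ ?_ ?_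
    · convert h using 1
      funext n
      simp only [hpow, intervalIntegral.integral_mul_const]
      have : ∫ τ in (0 : ℝ)..1, ((τ : ℂ) ^ n) = ((n : ℂ) + 1)⁻¹ := by
        have := integral_pow (a := 0) (b := 1) n
        have h2 : ∫ τ in (0 : ℝ)..1, ((τ ^ n : ℝ) : ℂ) = ((n : ℂ) + 1)⁻¹ := by
          rw [intervalIntegral.integral_ofReal, this]
          simp
        simpa using h2
      rw [this]; rfl
    · intro n
      simp only [hpow]
      exact (by fun_prop : Continuous fun τ : ℝ => (τ : ℂ) ^ n * p n fun _ => y).aestronglyMeasurable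
    · intro n
      refine Eventually.of_forall fun τ hτ => ?_
      rw [Set.uIoc_of_le zero_le_one] at hτ
      rw [hpow, norm_mul, norm_pow, Complex.norm_real, Real.norm_of_nonneg hτ.1.le]
      exact mul_le_of_le_one_left (norm_nonneg _) (pow_le_one₀ hτ.1.le hτ.2)
    · refine Eventually.of_forall fun τ _ => ?_
      refine p.summable_norm_apply ?_
      exact Metric.eball_subset_eball hp.r_le hy
    · exact intervalIntegrable_const
    · refine Eventually.of_forall fun τ hτ => ?_
      rw [Set.uIoc_of_le zero_le_one] at hτ
      have : (τ : ℂ) • y ∈ Metric.eball (0 : Fin v → ℂ) r := by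
        rw [Metric.mem_eball, edist_zero_right] at hy ⊢
        refine lt_of_le_of_lt ?_ hy
        rw [enorm_le_iff_norm_le, norm_smul, Complex.norm_real, Real.norm_of_nonneg hτ.1.le]
        exact mul_le_of_le_one_left (norm_nonneg _) hτ.2
      simpa using hp.hasSum this


lemma pad_smul {v : ℕ} (τ : ℝ) (s : Fin v → ℝ) (j : ℕ) : pad v (τ • s) j = τ * pad v s j := by
  unfold pad; split_ifs <;> simp

lemma pad_zero' (v : ℕ) : pad v (0 : Fin v → ℝ) = 0 := by
  funext j; simp [pad]

lemma Adm_smul {v : ℕ} {s : Fin v → ℝ} (h : Adm v (pad v s)) {τ : ℝ} (h0 : 0 ≤ τ) (h1 : τ ≤ 1) :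
    Adm v (pad v (τ • s)) := by
  refine ⟨fun x hx => ?_, ?_⟩
  · simp only [pad_smul, mul_assoc]
    rw [← Finset.mul_sum]
    exact mul_nonneg h0 (h.1 x hx)
  · simp only [pad_smul, abs_mul, abs_of_nonneg h0]
    rw [← Finset.mul_sum]
    have h2 : 0 ≤ ∑ j ∈ Finset.Icc 1 v, |pad v s j| := Finset.sum_nonneg fun _ _ => abs_nonneg _
    nlinarith [h.2]

lemma Adm_zero (v : ℕ) : Adm v 0 := by
  refine ⟨fun x _ => by simp, by simp⟩

/-- The linear statistic `∑ s_j p_{j+1}`. -/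
def Pst (v N : ℕ) (s : Fin v → ℝ) (x : Fin N → ℝ) : ℝ := ∑ j : Fin v, s j * pw N (j + 1) x

lemma dens_smul {v N : ℕ} (hN : 1 ≤ N) (s : Fin v → ℝ) (τ : ℝ) (x : Fin N → ℝ) :
    dens v N (pad v (τ • s)) x = dens v N 0 x * Real.exp (-(N : ℝ) ^ 2 * Pst v N s x * τ) := by
  have hN' : (N : ℝ) ≠ 0 := by positivity
  unfold dens
  rw [mul_assoc, ← Real.exp_add]
  congr 2
  have h1 : ∀ y, Vt v (pad v (τ • s)) y = Vt v 0 y + τ * ∑ j : Fin v, s j * y ^ ((j : ℕ) + 1) := by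
    intro y
    unfold Vt
    rw [sum_pad (τ • s) (fun j c => c * y ^ j), Finset.mul_sum]
    simp [mul_assoc]
  simp only [h1, Finset.sum_add_distrib, Pst, pw]
  rw [← Finset.mul_sum, Finset.sum_comm]
  simp only [← Finset.mul_sum, mul_div_assoc', ← Finset.sum_div]
  field_simp
  ring

lemma Pst_cont (v N : ℕ) (s : Fin v → ℝ) : Continuous (Pst v N s) := by
  unfold Pst
  have := fun k => (pw_contDiff N k).continuous
  fun_prop

lemma Pst_bound {v N : ℕ} (s : Fin v → ℝ) {x : Fin N → ℝ} (hx : x ∈ Bx N) :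
    |Pst v N s x| ≤ ∑ j : Fin v, |s j| * 16 ^ ((j : ℕ) + 1) := by
  unfold Pst
  refine (Finset.abs_sum_le_sum_abs _ _).trans (Finset.sum_le_sum fun j _ => ?_)
  rw [abs_mul]
  exact mul_le_mul_of_nonneg_left (pw_bound hx) (abs_nonneg _)

lemma Zb_deriv {v N : ℕ} (hN : 1 ≤ N) (s : Fin v → ℝ) (τ : ℝ) :
    HasDerivAt (fun τ : ℝ => Zb v N (pad v (τ • s)))
      (∫ x in Bx N, -(N : ℝ) ^ 2 * Pst v N s x * dens v N (pad v (τ • s)) x) τ := by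
  set M := ∑ j : Fin v, |s j| * 16 ^ ((j : ℕ) + 1) with hM
  have hM0 : 0 ≤ M := by positivity
  have hP := Pst_cont v N s
  have hD := fun t => dens_continuous v N t
  refine (hasDerivAt_integral_of_dominated_loc_of_deriv_le (μ := volume.restrict (Bx N))
    (F := fun τ x => dens v N (pad v (τ • s)) x)
    (F' := fun τ x => -(N : ℝ) ^ 2 * Pst v N s x * dens v N (pad v (τ • s)) x)
    (bound := fun x => (N : ℝ) ^ 2 * M * (dens v N 0 x * Real.exp ((N : ℝ) ^ 2 * M * (|τ| + 1))))
    (Metric.ball_mem_nhds τ one_pos) ?_ ?_ ?_ ?_ ?_ ?_).2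
  · exact Eventually.of_forall fun τ => (hD _).aestronglyMeasurable
  · exact dens_intOn _ _ _
  · exact ((continuous_const.mul hP).mul (hD _)).aestronglyMeasurable
  · refine (ae_restrict_iff' (Bx_meas N)).2 (Eventually.of_forall fun x hx τ' hτ' => ?_)
    have hb := Pst_bound s hx
    rw [← hM] at hb
    rw [dens_smul hN, norm_mul, Real.norm_eq_abs, abs_mul, abs_neg, abs_of_nonneg (by positivity : (0 : ℝ) ≤ (N : ℝ) ^ 2),
      Real.norm_eq_abs, abs_mul, abs_of_nonneg (dens_nonneg _ _ _ _), Real.abs_exp]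
    have hd := dens_nonneg v N 0 x
    have ht : |τ'| ≤ |τ| + 1 := by
      rw [Metric.mem_ball, Real.dist_eq] at hτ'
      have := abs_sub_abs_le_abs_sub τ' τ
      linarith
    have he : -(N : ℝ) ^ 2 * Pst v N s x * τ' ≤ (N : ℝ) ^ 2 * M * (|τ| + 1) := by
      refine (le_abs_self _).trans ?_
      rw [abs_mul, abs_mul, abs_neg, abs_of_nonneg (by positivity : (0 : ℝ) ≤ (N : ℝ) ^ 2)]
      gcongr
    gcongr
  · exact ((dens_intOn v N 0).mul_const _).const_mul _
  · refine Eventually.of_forall fun x τ' _ => ?_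
    simp only [dens_smul hN]
    have h1 : HasDerivAt (fun τ : ℝ => -(N : ℝ) ^ 2 * Pst v N s x * τ) (-(N : ℝ) ^ 2 * Pst v N s x) τ' := by
      have h0 := (hasDerivAt_id' τ').const_mul (-(N : ℝ) ^ 2 * Pst v N s x)
      rwa [mul_one] at h0
    have h2 := h1.exp.const_mul (dens v N 0 x)
    exact h2.congr_deriv (by ring)

lemma log_Zb_deriv {v N : ℕ} (hN : 1 ≤ N) (s : Fin v → ℝ) (τ : ℝ) :
    HasDerivAt (fun τ : ℝ => Real.log (Zb v N (pad v (τ • s))))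
      (-(N : ℝ) ^ 2 * ∑ j : Fin v, s j * XR v N (pad v (τ • s)) [(j : ℕ) + 1]) τ := by
  have h := (Zb_deriv hN s τ).log (Zb_pos _ _ _).ne'
  convert h using 1
  have e : ∀ x, -(N : ℝ) ^ 2 * Pst v N s x * dens v N (pad v (τ • s)) x =
      -(N : ℝ) ^ 2 * ∑ j : Fin v, s j * (GG N [(j : ℕ) + 1] x * dens v N (pad v (τ • s)) x) := by
    intro x
    simp only [Pst, GG, mul_one]
    rw [mul_assoc, Finset.sum_mul]
    simp only [mul_assoc]
  simp only [e]
  rw [integral_const_mul, integral_finsetSum _ fun j _ => (GGd_int v N _ _).const_mul _]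
  simp only [integral_const_mul, XR, mul_div_assoc, Finset.sum_div]

/-- real coefficient along the ray. -/
def sr {v : ℕ} (S : ℕ → (Fin v → ℂ) → List ℕ → ℂ) (s : Fin v → ℝ) (g k : ℕ) (τ : ℝ) : ℝ :=
  (S g (fun i => (((τ • s) i : ℝ) : ℂ)) [k]).re

lemma norm_smul_sum {v : ℕ} (s : Fin v → ℝ) (τ : ℝ) :
    ∑ j, ‖(((τ • s) j : ℝ) : ℂ)‖ = |τ| * ∑ j, |s j| := by
  rw [Finset.mul_sum]
  simp [abs_mul]

lemma ray_lt {v : ℕ} {d : ℝ} {s : Fin v → ℝ} (hs : ∑ j, |s j| < d) {τ : ℝ} (hτ : τ ∈ Set.Icc (0 : ℝ) 1) :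
    ∑ j, ‖(((τ • s) j : ℝ) : ℂ)‖ < d := by
  rw [norm_smul_sum, abs_of_nonneg hτ.1]
  have : 0 ≤ ∑ j, |s j| := Finset.sum_nonneg fun _ _ => abs_nonneg _
  nlinarith [hτ.2]

lemma sr_contAt {v : ℕ} {d : ℝ} {S : ℕ → (Fin v → ℂ) → List ℕ → ℂ} (hS : IsS v d S)
    (s : Fin v → ℝ) (g k : ℕ) {τ : ℝ} (h : ∑ j, ‖(((τ • s) j : ℝ) : ℂ)‖ < d) :
    ContinuousAt (sr S s g k) τ := by
  have h1 := (hS.an g _ [k] h).continuousAt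
  have h2 : ContinuousAt (fun τ : ℝ => (fun i => (((τ • s) i : ℝ) : ℂ))) τ := by
    apply Continuous.continuousAt
    simp only [Pi.smul_apply, smul_eq_mul]
    fun_prop
  exact Complex.continuous_re.continuousAt.comp (ContinuousAt.comp (f := fun τ : ℝ => (fun i => (((τ • s) i : ℝ) : ℂ))) h1 h2)

lemma sr_deriv {v : ℕ} {d : ℝ} {S : ℕ → (Fin v → ℂ) → List ℕ → ℂ} (hS : IsS v d S)
    {s : Fin v → ℝ} (hs : ∑ j, |s j| < d) (g k : ℕ) {τ : ℝ} (hτ : τ ∈ Set.Icc (0 : ℝ) 1) :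
    HasDerivAt (fun u => ∫ σ in (0 : ℝ)..u, sr S s g k σ) (sr S s g k τ) τ := by
  refine intervalIntegral.integral_hasDerivAt_right ?_ ?_ (sr_contAt hS s g k (ray_lt hs hτ))
  · apply ContinuousOn.intervalIntegrable
    intro σ hσ
    rw [Set.uIcc_of_le hτ.1] at hσ
    exact (sr_contAt hS s g k (ray_lt hs ⟨hσ.1, hσ.2.trans hτ.2⟩)).continuousWithinAt
  · refine ContinuousAt.stronglyMeasurableAtFilter (s := {τ : ℝ | ∑ j, ‖(((τ • s) j : ℝ) : ℂ)‖ < d})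
      ?_ (fun x hx => sr_contAt hS s g k hx) τ (ray_lt hs hτ)
    simp only [norm_smul_sum]
    exact isOpen_lt (by fun_prop) continuous_const

/-- the real coefficients. -/
def ee {v : ℕ} (S : ℕ → (Fin v → ℂ) → List ℕ → ℂ) (g : ℕ) (s : Fin v → ℝ) : ℝ :=
  -∑ j : Fin v, s j * ∫ σ in (0 : ℝ)..1, sr S s g (j + 1) σ

/-- the complex coefficients. -/
def EE {v : ℕ} (S : ℕ → (Fin v → ℂ) → List ℕ → ℂ) (g : ℕ) (t : Fin v → ℂ) : ℂ :=
  -∑ j : Fin v, t j * ∫ σ in (0 : ℝ)..1, S g ((σ : ℂ) • t) [(j : ℕ) + 1]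

lemma EE_an {v : ℕ} {d : ℝ} {S : ℕ → (Fin v → ℂ) → List ℕ → ℂ} (hS : IsS v d S) (hd : 0 < d) (g : ℕ) :
    AnalyticAt ℂ (EE S g) 0 := by
  unfold EE
  refine AnalyticAt.neg (Finset.analyticAt_fun_sum _ fun j _ => AnalyticAt.mul ?_ ?_)
  · exact (ContinuousLinearMap.proj (R := ℂ) (φ := fun _ : Fin v => ℂ) j).analyticAt 0
  · exact analyticAt_integral (f := fun t => S g t [(j : ℕ) + 1]) (hS.an g 0 _ (by simpa using hd))

lemma EE_real {v : ℕ} {d : ℝ} {S : ℕ → (Fin v → ℂ) → List ℕ → ℂ} (hS : IsS v d S)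
    {s : Fin v → ℝ} (hs : ∑ j, |s j| < d) (g : ℕ) : EE S g (fun i => (s i : ℂ)) = ee S g s := by
  unfold EE ee
  push_cast
  congr 1
  refine Finset.sum_congr rfl fun j _ => ?_
  congr 1
  rw [← intervalIntegral.integral_ofReal]
  refine intervalIntegral.integral_congr fun σ hσ => ?_
  rw [Set.uIcc_of_le zero_le_one] at hσ
  have h := congrFun (S_real hS (s := σ • s) (ray_lt hs hσ) g) [(j : ℕ) + 1]
  have h2 := Complex.conj_eq_iff_re.1 h
  simp only [sr]
  rw [h2]
  congr 1
  funext i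
  simp

theorem Zb_expansion {v : ℕ} {d : ℝ} {S : ℕ → (Fin v → ℂ) → List ℕ → ℂ} (hS : IsS v d S) (H : ℕ) :
    ∃ C : ℝ, ∀ s : Fin v → ℝ, Adm v (pad v s) → ∑ j, |s j| < d → ∀ N : ℕ, 1 ≤ N →
      |Real.log (Zb v N (pad v s)) - Real.log (Zb v N 0) -
        (N : ℝ) ^ 2 * ∑ g ∈ range H, (((N : ℝ) ^ 2)⁻¹) ^ g * ee S g s| ≤
          C * ((N : ℝ) ^ 2 * (((N : ℝ) ^ 2)⁻¹) ^ H) := by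
  obtain ⟨C, hC⟩ := expansion hS H
  refine ⟨∑ j : Fin v, d * (|C| * lw (rg 64 H) [(j : ℕ) + 1]), fun s hs hd N hN => ?_⟩
  set ε : ℝ := ((N : ℝ) ^ 2)⁻¹ with hε
  have hε0 : 0 ≤ ε := by positivity
  have hεc : ((N : ℂ) ^ 2)⁻¹ = (ε : ℂ) := by rw [hε]; push_cast; rfl
  set f : ℝ → ℝ := fun τ => Real.log (Zb v N (pad v (τ • s))) +
    (N : ℝ) ^ 2 * ∑ g ∈ range H, ε ^ g * ∑ j : Fin v, s j * ∫ σ in (0 : ℝ)..τ, sr S s g (j + 1) σ with hf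
  set f' : ℝ → ℝ := fun τ => -(N : ℝ) ^ 2 * ∑ j : Fin v, s j * XR v N (pad v (τ • s)) [(j : ℕ) + 1] +
    (N : ℝ) ^ 2 * ∑ g ∈ range H, ε ^ g * ∑ j : Fin v, s j * sr S s g (j + 1) τ with hf'
  have hder : ∀ τ ∈ Set.Icc (0 : ℝ) 1, HasDerivWithinAt f (f' τ) (Set.Icc 0 1) τ := by
    intro τ hτ
    refine HasDerivAt.hasDerivWithinAt ?_
    refine (log_Zb_deriv hN s τ).add (HasDerivAt.const_mul _ ?_)
    refine HasDerivAt.fun_sum fun g _ => HasDerivAt.const_mul _ ?_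
    exact HasDerivAt.fun_sum fun j _ => HasDerivAt.const_mul _ (sr_deriv hS hd g _ hτ)
  have hbd : ∀ τ ∈ Set.Ico (0 : ℝ) 1, ‖f' τ‖ ≤
      (∑ j : Fin v, d * (|C| * lw (rg 64 H) [(j : ℕ) + 1])) * ((N : ℝ) ^ 2 * ε ^ H) := by
    intro τ hτ
    have hτ' : τ ∈ Set.Icc (0 : ℝ) 1 := ⟨hτ.1, hτ.2.le⟩
    have hB := hC (τ • s) (Adm_smul hs hτ'.1 hτ'.2) (ray_lt hd hτ') N hN
    have e : f' τ = -(N : ℝ) ^ 2 * ∑ j : Fin v, s j * (XR v N (pad v (τ • s)) [(j : ℕ) + 1] -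
        ∑ g ∈ range H, ε ^ g * sr S s g (j + 1) τ) := by
      simp only [hf', mul_sub, Finset.sum_sub_distrib, Finset.mul_sum]
      rw [Finset.sum_comm (s := range H)]
      have : ∀ (i : Fin v) (g : ℕ), (N : ℝ) ^ 2 * (ε ^ g * (s i * sr S s g (i + 1) τ)) =
        -(-(N : ℝ) ^ 2 * (s i * (ε ^ g * sr S s g (i + 1) τ))) := fun i g => by ring
      simp only [this, Finset.sum_neg_distrib]
      ring
    rw [e, norm_mul, norm_neg, norm_pow, Real.norm_natCast]
    have h3 : ‖∑ j : Fin v, s j * (XR v N (pad v (τ • s)) [(j : ℕ) + 1] -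
        ∑ g ∈ range H, ε ^ g * sr S s g (j + 1) τ)‖ ≤
        ∑ j : Fin v, d * (|C| * lw (rg 64 H) [(j : ℕ) + 1] * ε ^ H) := by
      refine (norm_sum_le _ _).trans (Finset.sum_le_sum fun j _ => ?_)
      rw [norm_mul]
      have hsj : ‖s j‖ ≤ d := by
        refine le_trans ?_ hd.le
        exact Finset.single_le_sum (f := fun j => |s j|) (fun _ _ => abs_nonneg _) (Finset.mem_univ j)
      refine mul_le_mul hsj ?_ (norm_nonneg _) hS.hd0
      have h4 := hB [(j : ℕ) + 1]
      rw [hεc] at h4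
      have h5 := (Complex.abs_re_le_norm _).trans h4
      have e2 : ((XN v N (τ • s) - ∑ g ∈ range H, (ε : ℂ) ^ g • S g (fun i => (((τ • s) i : ℝ) : ℂ))) [(j : ℕ) + 1]).re =
          XR v N (pad v (τ • s)) [(j : ℕ) + 1] - ∑ g ∈ range H, ε ^ g * sr S s g (j + 1) τ := by
        simp only [Pi.sub_apply, Finset.sum_apply, Pi.smul_apply, Complex.sub_re, Complex.re_sum, XN,
          Complex.ofReal_re, smul_eq_mul, ← Complex.ofReal_pow, Complex.re_ofReal_mul, sr]
      rw [e2] at h5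
      refine h5.trans ?_
      have hl := lw_pos (rg_pos H) [(j : ℕ) + 1]
      have : C * ε ^ H * lw (rg 64 H) [(j : ℕ) + 1] = C * (lw (rg 64 H) [(j : ℕ) + 1] * ε ^ H) := by ring
      rw [this, mul_assoc]
      exact mul_le_mul_of_nonneg_right (le_abs_self C) (by positivity)
    refine (mul_le_mul_of_nonneg_left h3 (by positivity)).trans (le_of_eq ?_)
    rw [Finset.mul_sum, Finset.sum_mul]
    refine Finset.sum_congr rfl fun j _ => ?_
    ring
  have hmv := norm_image_sub_le_of_norm_deriv_le_segment_01' hder hbd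
  refine le_trans (le_of_eq ?_) hmv
  rw [Real.norm_eq_abs]
  congr 1
  simp only [hf, one_smul, zero_smul, pad_zero', intervalIntegral.integral_same, mul_zero,
    Finset.sum_const_zero, add_zero, ee, mul_neg, Finset.sum_neg_distrib]
  ring

lemma Tdom_Adm {v : ℕ} (hv : 2 ≤ v) (hve : Even v) {T : ℝ} {s : Fin v → ℝ}
    (h : pad v s ∈ Tdom v T 1) (hT : (v : ℝ) * T ≤ 1 / 2) :
    Adm v (pad v s) ∧ ∑ j, |s j| ≤ v * T := by
  obtain ⟨h1, h2⟩ := h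
  have hle : ∑ j ∈ Finset.Icc 1 v, |pad v s j| ≤ v * T := by
    have : ∀ j ∈ Finset.Icc 1 v, |pad v s j| ≤ T := fun j hj => by
      refine le_trans ?_ h1
      rw [← Real.sqrt_sq_eq_abs]
      exact Real.sqrt_le_sqrt (Finset.single_le_sum (f := fun j => pad v s j ^ 2)
        (fun _ _ => sq_nonneg _) hj)
    refine (Finset.sum_le_sum this).trans ?_
    simp
  refine ⟨⟨fun x hx => ?_, hle.trans hT⟩, ?_⟩
  · obtain ⟨w, rfl⟩ : ∃ w, v = w + 1 := ⟨v - 1, by omega⟩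
    rw [Finset.sum_Icc_succ_top (by omega)]
    simp only [Nat.add_sub_cancel, one_mul] at h2
    have h3 : |∑ j ∈ Finset.Icc 1 w, pad (w + 1) s j * x ^ j| ≤
        (∑ j ∈ Finset.Icc 1 w, |pad (w + 1) s j|) * |x| ^ (w + 1) := by
      refine (Finset.abs_sum_le_sum_abs _ _).trans ?_
      rw [Finset.sum_mul]
      refine Finset.sum_le_sum fun j hj => ?_
      rw [abs_mul, abs_pow]
      have := (Finset.mem_Icc.1 hj).2
      exact mul_le_mul_of_nonneg_left (pow_le_pow_right₀ hx (by omega)) (abs_nonneg _)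
    have h4 : x ^ (w + 1) = |x| ^ (w + 1) := (hve.pow_abs x).symm
    rw [h4]
    have h5 := (abs_le.1 h3).1
    have h6 := mul_le_mul_of_nonneg_right h2.le (by positivity : 0 ≤ |x| ^ (w + 1))
    linarith
  · rw [sum_pad s (fun _ c => |c|)] at hle
    exact hle

/-- There exist `T > 0`, `γ > 0` and functions `e_0, e_1, e_2, …`, each
analytic in the complex vector `t` in a neighborhood of `t = 0`, such that
`log(Z_N(t)/Z_N(0))` admits the complete asymptotic expansion
`N² e_0(t) + e_1(t) + N⁻² e_2(t) + ⋯` in even powers of `1/N`, uniformly for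
`t ∈ 𝕋(T,γ)`. -/
theorem logZ_full_expansion (v : ℕ) (hv : 2 ≤ v) (hve : Even v) :
    ∃ T > (0 : ℝ), ∃ γ > (0 : ℝ), ∃ e : ℕ → (Fin v → ℝ) → ℝ,
      (∀ j : ℕ, ∃ (E : (Fin v → ℂ) → ℂ) (U : Set (Fin v → ℂ)),
        U ∈ nhds (0 : Fin v → ℂ) ∧ AnalyticOn ℂ E U ∧
        ∀ s : Fin v → ℝ, (fun i => (s i : ℂ)) ∈ U → E (fun i => (s i : ℂ)) = e j s) ∧
      ∀ h : ℕ, ∃ C : ℝ, ∀ s : Fin v → ℝ, pad v s ∈ Tdom v T γ → ∀ N : ℕ, 1 ≤ N →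
        |Real.log (Z v N (pad v s) / Z v N 0) -
            ((N : ℝ) ^ 2 * e 0 s +
              ∑ j ∈ Finset.range (h + 1), ((N : ℝ) ^ (2 * j))⁻¹ * e (j + 1) s)| ≤
          C / (N : ℝ) ^ (2 * h + 2) := by
  set d : ℝ := min (1 / 2) (1 / 4 / (4 * v * (2 * 64 : ℝ) ^ v)) with hd
  have hv0 : (0 : ℝ) < v := by positivity
  have hK : (0 : ℝ) < 4 * v * (2 * 64 : ℝ) ^ v := by positivity
  have hd0 : 0 < d := lt_min (by norm_num) (by positivity)
  have hd1 : d * (4 * v * (2 * 64 : ℝ) ^ v) ≤ 1 / 4 := by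
    rw [← le_div_iff₀ hK]; exact min_le_right _ _
  have hd2 : d ≤ 1 / 2 := min_le_left _ _
  obtain ⟨S, hS1, hS2, hS3, hS4⟩ := exists_S v (r0 := 64) (d := d) (by norm_num) hd0.le hd1
  have hS : IsS v d S := ⟨hd0.le, hd1, hS1, hS2, hS3, hS4⟩
  have hvT : (v : ℝ) * (d / (2 * v)) = d / 2 := by field_simp
  refine ⟨d / (2 * v), by positivity, 1, one_pos, ee S, fun j => ?_, fun h => ?_⟩
  · refine ⟨EE S j, {t | AnalyticAt ℂ (EE S j) t} ∩ {t | ∑ i, ‖t i‖ < d}, ?_, ?_, ?_⟩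
    · refine inter_mem (EE_an hS hd0 j).eventually_analyticAt ?_
      refine IsOpen.mem_nhds (isOpen_lt (by fun_prop) continuous_const) ?_
      simpa using hd0
    · exact fun t ht => ht.1.analyticWithinAt
    · intro s hs
      refine EE_real hS ?_ j
      simpa using hs.2
  · obtain ⟨C, hC⟩ := Zb_expansion hS (h + 2)
    refine ⟨C + 24 * (2 * (h + 1)).factorial, fun s hs N hN => ?_⟩
    obtain ⟨hA, hsum⟩ := Tdom_Adm hv hve hs (by rw [hvT]; linarith)
    have hC' := hC s hA (by rw [hvT] at hsum; linarith) N hN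
    have hN0 : (0 : ℝ) < N := by exact_mod_cast hN
    have hz1 := log_Z_Zb hA hN
    have hz0 := log_Z_Zb (Adm_zero v) hN
    have hexp : (N : ℝ) * Real.exp (-32 * (N : ℝ)) ≤
        (2 * (h + 1)).factorial * (((N : ℝ) ^ 2)⁻¹) ^ (h + 1) := by
      refine le_trans ?_ (exp_le_eps (h + 1) hN (c := 31) (by norm_num))
      have h1 : (N : ℝ) ≤ Real.exp N := by linarith [Real.add_one_le_exp (N : ℝ)]
      have h2 : Real.exp (-31 * (N : ℝ)) = Real.exp N * Real.exp (-32 * (N : ℝ)) := by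
        rw [← Real.exp_add]; congr 1; ring
      rw [h2]
      exact mul_le_mul_of_nonneg_right h1 (Real.exp_pos _).le
    have hpow : (((N : ℝ) ^ 2)⁻¹) ^ (h + 1) = ((N : ℝ) ^ (2 * h + 2))⁻¹ := by
      rw [inv_pow, ← pow_mul]; ring_nf
    have hpow2 : (N : ℝ) ^ 2 * (((N : ℝ) ^ 2)⁻¹) ^ (h + 2) = ((N : ℝ) ^ (2 * h + 2))⁻¹ := by
      rw [← hpow, pow_succ _ (h + 1)]; field_simp
    have hexpand : (N : ℝ) ^ 2 * ∑ g ∈ range (h + 2), (((N : ℝ) ^ 2)⁻¹) ^ g * ee S g s =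
        (N : ℝ) ^ 2 * ee S 0 s +
          ∑ j ∈ Finset.range (h + 1), ((N : ℝ) ^ (2 * j))⁻¹ * ee S (j + 1) s := by
      rw [Finset.sum_range_succ', mul_add, add_comm, Finset.mul_sum]
      congr 1
      · simp
      · refine Finset.sum_congr rfl fun j _ => ?_
        rw [pow_succ (((N : ℝ) ^ 2)⁻¹) j, inv_pow, ← pow_mul]
        field_simp
    rw [hexpand, hpow2] at hC'
    rw [hpow] at hexp
    rw [Real.log_div (Z_pos hA hN).ne' (Z_pos (Adm_zero v) hN).ne', div_eq_mul_inv, add_mul]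
    rw [abs_le] at hC' hz1 hz0 ⊢
    constructor <;> linarith [hC'.1, hC'.2, hz1.1, hz1.2, hz0.1, hz0.2]

end LoopEq
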